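/- arXiv:1203.6498 — 2 statements merged into one kernel-verified Lean document; each statement's English description precedes it below -/
import Mathlib

section
/- Let (K, v_K) be a field with a multiplicative valuation v_K : K → ℝ≥0, and let L be an algebraically closed field extension of K equipped with a valuation v : L → ℝ≥0 extending v_K and such that v(L^×) = ℝ>0. Let R = K[Y₁,…,Y_m]/I with I a prime ideal, let f₁,…,fₙ be units of R, let F = Frac(R), and let (g_{ℓ,j}) be a finite doubly-indexed family of elements of R and (γ_{ℓ,j}) positive reals. For every r = (r₁,…,rₙ) ∈ (ℝ>0)ⁿ the following are equivalent: (i) there exists a K-algebra homomorphism φ : R → L such that for some ℓ, v(φ(g_{ℓ,j})) ≤ γ_{ℓ,j} for all j, and v(φ(fᵢ)) = rᵢ for all i; (ii) there exist a linearly ordered commutative group with zero Δ₀, an injective order-preserving homomorphism of monoids with zero ι : ℝ≥0 → Δ₀, and a valuation w : F → Δ₀ whose restriction to K equals ι ∘ v_K, such that for some ℓ, w(g_{ℓ,j}) ≤ ι(γ_{ℓ,j}) for all j, and w(fᵢ) = ι(rᵢ) for all i. -/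
/-!
Write `R = K[Y]/I` and `F = Frac R`.

From a point to a valuation. Given `φ : R → L`, the map `v ∘ φ` is a valuation on `R`, in general
with a nonzero support. Adjoin variables `T_s`, one for each `s` in `ℝ≥0`, sent to
elements of `L` of value `s`. A valuation with support on a domain is refined by a genuine
valuation on a fraction field, given by a valuation ring dominating a suitable local ring
(`exists_valuationSubring_refines`). The homomorphism `ι` sends `s` to the new value of `T_s`
(`exists_valuation_of_point`).

From a valuation to a point. Extend `w` to a valuation on an algebraically closed field `M`
containing `F` (`exists_isAlgClosed_extension`). A subfield `E` of `M` containing `K` is called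
approximable (`HasApprox`) if any finitely many elements of `E` lie in the domain of a
`K`-homomorphism from a subring of `E` to `L` which preserves finitely many prescribed inequalities
`w y ≤ ι c`. Approximability passes

* to the algebraic closure (`HasApprox.algebraicClosure`). Up to powers and factors from `E`, an
  algebraic element is a quotient of integral elements over the valuation ring of `E` with a unit as
  denominator. Homomorphisms to `L` extend along integral extensions, and integral equations bound
  the values of the images. Choosing the image of the product of the denominators among the roots
  of its minimal polynomial makes all the denominators units.
* from an algebraically closed `E` to `E(t)` (`HasApprox.adjoin_simple`). Elements of `E(t)` are
  quotients of products of linear factors `t - a`, so the inequalities become monomial inequalities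
  in the distance from `t` to the nearest of these `a`. They are solved in a divisible group
  (`exists_pick`), and `t` is sent to a point in general position on a disc in `L`, which exists
  because the residue field of `L` is infinite (`exists_generic_unit`).

Hence finitely generated extensions of `K` are approximable (`hasApprox_adjoin`). Applied to the
coordinate functions, the `g ℓ j`, the `f i` and their inverses, this gives the point; the equality
`w (f i) = ι (r i)` amounts to upper bounds for the values of `f i` and of its inverse.
-/

/-! ### Points in general position and extension of homomorphisms -/

namespace TropVal
open Polynomial

lemma coeff_prod_le {M Γ : Type*} [Field M] [LinearOrderedCommGroupWithZero Γ]
    (w : Valuation M Γ) (m : Multiset M) (h : ∀ a ∈ m, w a ≤ 1) (i : ℕ) :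
    w ((m.map (fun a => X - C a)).prod.coeff i) ≤ 1 := by
  induction m using Multiset.induction_on generalizing i with
  | empty => simp [coeff_one]; split_ifs <;> simp
  | cons a m ih =>
    have ih' := ih (fun b hb => h b (Multiset.mem_cons_of_mem hb))
    have ha := h a (Multiset.mem_cons_self a m)
    have h2 : w (a * (m.map (fun a => X - C a)).prod.coeff i) ≤ 1 := by
      rw [map_mul]; exact mul_le_one' ha (ih' i)
    rw [Multiset.map_cons, Multiset.prod_cons, sub_mul, coeff_sub, coeff_C_mul]
    refine (w.map_sub _ _).trans (max_le ?_ h2)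
    cases i with
    | zero => simp
    | succ i => rw [coeff_X_mul]; exact ih' i

lemma coeff_prod_lt {M Γ : Type*} [Field M] [LinearOrderedCommGroupWithZero Γ]
    (w : Valuation M Γ) (m : Multiset M) (h : ∀ a ∈ m, w a < 1) (i : ℕ)
    (hi : i < Multiset.card m) :
    w ((m.map (fun a => X - C a)).prod.coeff i) < 1 := by
  induction m using Multiset.induction_on generalizing i with
  | empty => simp at hi
  | cons a m ih =>
    have ih' := ih (fun b hb => h b (Multiset.mem_cons_of_mem hb))
    have ha := h a (Multiset.mem_cons_self a m)
    have h2 : w (a * (m.map (fun a => X - C a)).prod.coeff i) < 1 := by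
      rw [map_mul]
      exact mul_lt_one_of_lt_of_le ha
        (coeff_prod_le w m (fun b hb => (h b (Multiset.mem_cons_of_mem hb)).le) i)
    rw [Multiset.map_cons, Multiset.prod_cons, sub_mul, coeff_sub, coeff_C_mul]
    refine (w.map_sub _ _).trans_lt (max_lt ?_ h2)
    cases i with
    | zero => simp
    | succ i =>
      rw [coeff_X_mul]
      exact ih' i (by simpa using hi)

/-- The residue field of an algebraically closed valued field is infinite: there is a unit `u`
whose residue avoids finitely many prescribed residue classes. -/
lemma exists_generic_unit {L Γ : Type*} [Field L] [IsAlgClosed L]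
    [LinearOrderedCommGroupWithZero Γ] (v : Valuation L Γ) (s : Finset L)
    (hs : ∀ a ∈ s, v a ≤ 1) : ∃ u : L, v u = 1 ∧ ∀ a ∈ s, v (u - a) = 1 := by
  classical
  -- `u` is a root of `X * ∏ (X - a) - 1`
  let f : L[X] := ∏ a ∈ insert 0 s, (X - C a)
  have hf : f.Monic := monic_prod_of_monic _ _ (fun a _ => monic_X_sub_C a)
  have hs' : ∀ a ∈ insert 0 s, v a ≤ 1 := by
    intro a ha
    rcases Finset.mem_insert.1 ha with rfl | ha
    · simp
    · exact hs a ha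
  have hdeg : 0 < f.degree := by
    rw [degree_prod]
    simp
  have hdeg' : (f - C 1).degree ≠ 0 := by
    rw [degree_sub_C hdeg]
    exact hdeg.ne'
  obtain ⟨u, hu⟩ := IsAlgClosed.exists_root (f - C 1) hdeg'
  have hu1 : ∏ a ∈ insert 0 s, (u - a) = 1 := by
    have : f.eval u = 1 := by
      simpa [IsRoot, sub_eq_zero] using hu
    simpa [f, eval_prod] using this
  have hprod : ∏ a ∈ insert 0 s, v (u - a) = 1 := by
    rw [← map_prod, hu1, map_one]
  have hvu : v u ≤ 1 := by
    by_contra! hlt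
    have : ∀ a ∈ insert 0 s, v (u - a) = v u := by
      intro a ha
      exact Valuation.map_sub_eq_of_lt_left v ((hs' a ha).trans_lt hlt)
    rw [Finset.prod_congr rfl this, Finset.prod_const] at hprod
    have := one_lt_pow₀ hlt (n := (insert 0 s).card) (by simp)
    exact this.ne' hprod
  have hle : ∀ a ∈ insert 0 s, v (u - a) ≤ 1 := fun a ha =>
    (v.map_sub _ _).trans (max_le hvu (hs' a ha))
  have hall := (Finset.prod_eq_one_iff_of_le_one' hle).1 hprod
  refine ⟨u, by simpa using hall 0 (by simp), fun a ha => hall a (by simp [ha])⟩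

variable {K L M : Type*} [Field K] [Field L] [Field M] [Algebra K L] [Algebra K M]

/-- A pair of homomorphisms `α : P → M`, `β : P → L` with `ker α ≤ ker β` defines a homomorphism
to `L` from the subalgebra of `M` of all fractions `α p / α q` with `β q ≠ 0`. -/
lemma exists_fraction_hom {P : Type*} [CommRing P] [Algebra K P] (α : P →ₐ[K] M) (β : P →ₐ[K] L)
    (hker : ∀ p, α p = 0 → β p = 0) :
    ∃ (B : Subalgebra K M) (φ : B →ₐ[K] L), ∀ p q, β q ≠ 0 →
      ∃ h : α p / α q ∈ B, φ ⟨α p / α q, h⟩ = β p / β q := by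
  classical
  have hα : ∀ q, β q ≠ 0 → α q ≠ 0 := fun q hq h => hq (hker q h)
  let B : Subalgebra K M :=
    { carrier := {x | ∃ p q, β q ≠ 0 ∧ x = α p / α q}
      mul_mem' := by
        rintro _ _ ⟨p, q, hq, rfl⟩ ⟨p', q', hq', rfl⟩
        refine ⟨p * p', q * q', by simp [hq, hq'], ?_⟩
        rw [map_mul, map_mul, div_mul_div_comm]
      add_mem' := by
        rintro _ _ ⟨p, q, hq, rfl⟩ ⟨p', q', hq', rfl⟩
        refine ⟨p * q' + q * p', q * q', by simp [hq, hq'], ?_⟩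
        rw [map_add, map_mul, map_mul, map_mul, div_add_div _ _ (hα _ hq) (hα _ hq')]
      algebraMap_mem' := fun k => ⟨algebraMap K P k, 1, by simp, by simp⟩ }
  have hw : ∀ p q p' q', β q ≠ 0 → β q' ≠ 0 → α p / α q = α p' / α q' →
      β p / β q = β p' / β q' := by
    intro p q p' q' hq hq' h
    rw [div_eq_div_iff (hα _ hq) (hα _ hq'), ← sub_eq_zero, ← map_mul, ← map_mul, ← map_sub] at h
    have := hker _ h
    rw [map_sub, map_mul, map_mul, sub_eq_zero] at this
    rwa [div_eq_div_iff hq hq']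
  choose n d hd hx using fun x : B => x.2
  have key : ∀ (x : B) p q, β q ≠ 0 → (x : M) = α p / α q → β (n x) / β (d x) = β p / β q :=
    fun x p q hq h => hw _ _ _ _ (hd x) hq ((hx x).symm.trans h)
  let φ : B →ₐ[K] L :=
    { toFun := fun x => β (n x) / β (d x)
      map_one' := by simpa using key 1 1 1 (by simp) (by simp)
      map_zero' := by simpa using key 0 0 1 (by simp) (by simp)
      map_mul' := by
        intro x y
        rw [key (x * y) (n x * n y) (d x * d y) (by simp [hd])
          (by rw [Subalgebra.coe_mul, hx x, hx y, map_mul, map_mul, div_mul_div_comm]),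
          map_mul, map_mul, div_mul_div_comm]
      map_add' := by
        intro x y
        rw [key (x + y) (n x * d y + d x * n y) (d x * d y) (by simp [hd])
          (by rw [Subalgebra.coe_add, hx x, hx y, map_add, map_mul, map_mul, map_mul,
                div_add_div _ _ (hα _ (hd _)) (hα _ (hd _))]),
          map_add, map_mul, map_mul, map_mul, div_add_div _ _ (hd _) (hd _)]
      commutes' := by
        intro k
        simpa using key (algebraMap K B k) (algebraMap K P k) 1 (by simp) (by simp) }
  exact ⟨B, φ, fun p q hq => ⟨⟨p, q, hq, rfl⟩, key _ _ _ hq rfl⟩⟩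

/-- Homomorphisms to an algebraically closed field extend along integral extensions. -/
lemma exists_lift_of_isIntegral {A C L : Type*} [CommRing A] [CommRing C] [Field L]
    [IsAlgClosed L] [IsDomain C] [Algebra A C] [Algebra.IsIntegral A C]
    (hinj : Function.Injective (algebraMap A C)) (φ : A →+* L) :
    ∃ φ' : C →+* L, ∀ a : A, φ' (algebraMap A C a) = φ a := by
  have hp : (RingHom.ker φ).IsPrime := RingHom.ker_isPrime _
  obtain ⟨Q, hQ, hQp⟩ := Ideal.exists_ideal_over_prime_of_isIntegral_of_isDomain
    (S := C) (RingHom.ker φ) (by rw [(RingHom.injective_iff_ker_eq_bot _).1 hinj]; exact bot_le)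
  have : Q.LiesOver (RingHom.ker φ) := ⟨hQp.symm⟩
  let : Algebra (A ⧸ RingHom.ker φ) L := (RingHom.kerLift φ).toAlgebra
  have : FaithfulSMul (A ⧸ RingHom.ker φ) L :=
    (faithfulSMul_iff_algebraMap_injective _ _).2 (RingHom.kerLift_injective φ)
  have : Module.IsTorsionFree (A ⧸ RingHom.ker φ) (C ⧸ Q) :=
    Module.isTorsionFree_iff_faithfulSMul.2 (Ideal.Quotient.instFaithfulSMul Q _)
  have : Module.IsTorsionFree (A ⧸ RingHom.ker φ) L :=
    Module.isTorsionFree_iff_faithfulSMul.2 inferInstance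
  have : Algebra.IsIntegral (A ⧸ RingHom.ker φ) (C ⧸ Q) := inferInstance
  let ψ : (C ⧸ Q) →ₐ[A ⧸ RingHom.ker φ] L := IsAlgClosed.lift
  refine ⟨(ψ : (C ⧸ Q) →+* L).comp (Ideal.Quotient.mk Q), fun x => ?_⟩
  exact ψ.commutes (Ideal.Quotient.mk (RingHom.ker φ) x)

lemma exists_lift_integralClosure [IsAlgClosed L] (P : Subalgebra K M) (φ : P →ₐ[K] L) :
    ∃ φ' : integralClosure P M →ₐ[K] L,
      ∀ p : P, φ' (algebraMap P (integralClosure P M) p) = φ p := by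
  have hinj : Function.Injective (algebraMap P (integralClosure P M)) := by
    intro x y h
    exact Subtype.ext (congrArg (fun z : integralClosure P M => (z : M)) h)
  obtain ⟨ψ, hψ⟩ := exists_lift_of_isIntegral hinj (φ : P →+* L)
  refine ⟨{ ψ with commutes' := fun k => ?_ }, hψ⟩
  have := hψ (algebraMap K P k)
  rw [AlgHom.coe_toRingHom, φ.commutes] at this
  rw [← this]
  rfl

end TropVal

/-! ### Integral elements over the valuation ring of a subfield -/

namespace TropVal
open Polynomial

section
variable {K M Γ : Type*} [Field K] [Field M] [Algebra K M] [LinearOrderedCommGroupWithZero Γ]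

lemma root_le_one_sum (w : Valuation M Γ) {n : ℕ} (c : ℕ → M) (hc : ∀ i, w (c i) ≤ 1)
    {x : M} (hx : ∑ i ∈ Finset.range n, c i * x ^ i + x ^ n = 0) : w x ≤ 1 := by
  by_contra! hlt
  have hpos : w x ^ n ≠ 0 := pow_ne_zero _ (zero_lt_one.trans hlt).ne'
  have h1 : w (∑ i ∈ Finset.range n, c i * x ^ i) < w x ^ n := by
    refine w.map_sum_lt hpos fun i hi => ?_
    rw [map_mul, map_pow]
    calc w (c i) * w x ^ i ≤ 1 * w x ^ i := by gcongr; exact hc i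
      _ = w x ^ i := one_mul _
      _ < w x ^ n := pow_lt_pow_right₀ hlt (Finset.mem_range.1 hi)
  rw [add_eq_zero_iff_eq_neg] at hx
  rw [hx, Valuation.map_neg, map_pow] at h1
  exact h1.false

lemma root_le_one (w : Valuation M Γ) {g : M[X]} (hg : g.Monic) (hc : ∀ i, w (g.coeff i) ≤ 1)
    {x : M} (hx : g.eval x = 0) : w x ≤ 1 := by
  rw [eval_eq_sum_range, Finset.sum_range_succ, hg.coeff_natDegree, one_mul] at hx
  exact root_le_one_sum w _ hc hx

/-- A monic polynomial with integral coefficients, a non-leading one of which is a unit, does not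
have all its roots in the maximal ideal. -/
lemma exists_unit_root [IsAlgClosed M] (w : Valuation M Γ) {g : M[X]} (hg : g.Monic)
    (hc : ∀ i, w (g.coeff i) ≤ 1) (hi : ∃ i < g.natDegree, w (g.coeff i) = 1) :
    ∃ x, g.eval x = 0 ∧ w x = 1 := by
  obtain ⟨i, hi, hi1⟩ := hi
  by_contra! hno
  have hs := IsAlgClosed.splits g
  have hprod : g = (g.roots.map (fun a => X - C a)).prod := by
    have := hs.eq_prod_roots
    rwa [hg.leadingCoeff, C_1, one_mul] at this
  have hroots : ∀ a ∈ g.roots, w a < 1 := by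
    intro a ha
    have ha0 : g.eval a = 0 := (mem_roots hg.ne_zero).1 ha
    exact lt_of_le_of_ne (root_le_one w hg hc ha0) (hno a ha0)
  have := coeff_prod_lt w g.roots hroots i (by rwa [← hs.natDegree_eq_card_roots])
  rw [← hprod] at this
  exact this.ne hi1

/-- The valuation ring of the restriction of `w` to the subfield `E`, as a subring of `M`. -/
def integersIn (w : Valuation M Γ) (E : IntermediateField K M) : Subring M :=
  w.integer ⊓ E.toSubfield.toSubring

lemma mem_integersIn {w : Valuation M Γ} {E : IntermediateField K M} {x : M} :
    x ∈ integersIn w E ↔ w x ≤ 1 ∧ x ∈ E := Iff.rfl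

variable {w : Valuation M Γ} {E : IntermediateField K M}

lemma exists_poly_of_isIntegral {x : M} (hx : IsIntegral (integersIn w E) x) :
    ∃ f : M[X], f.Monic ∧ (∀ i, w (f.coeff i) ≤ 1 ∧ f.coeff i ∈ E) ∧ f.eval x = 0 := by
  obtain ⟨p, hp, h0⟩ := hx
  refine ⟨p.map (algebraMap _ M), hp.map _, fun i => ?_, by rwa [eval_map]⟩
  rw [coeff_map]
  exact mem_integersIn.1 (p.coeff i).2

lemma le_one_of_isIntegral {x : M} (hx : IsIntegral (integersIn w E) x) : w x ≤ 1 := by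
  obtain ⟨f, hf, hc, h0⟩ := exists_poly_of_isIntegral hx
  exact root_le_one w hf (fun i => (hc i).1) h0

/-- If `z` is a root of `f` and the coefficients of `f` are integral, so is `leadingCoeff f * z`. -/
lemma isIntegral_coeff_mul {R : Type*} [CommRing R] [Algebra R M] {f : M[X]} {z : M}
    (hf : ∀ i, IsIntegral R (f.coeff i)) (h0 : f.eval z = 0) :
    IsIntegral R (f.leadingCoeff * z) := by
  have hl : f ∈ lifts (algebraMap (integralClosure R M) M) := by
    rw [lifts_iff_coeff_lifts]
    exact fun i => ⟨⟨f.coeff i, hf i⟩, rfl⟩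
  obtain ⟨q, rfl⟩ := (mem_lifts _).1 hl
  have hinj : Function.Injective (algebraMap (integralClosure R M) M) := Subtype.val_injective
  have := isIntegral_leadingCoeff_smul q z (by rwa [eval_map_algebraMap] at h0)
  rw [leadingCoeff_map_of_injective hinj, ← Algebra.smul_def]
  exact isIntegral_trans _ this

/-- If `z` is integral for `w` and is a root of a polynomial with integral coefficients, one of
which is a unit, then `z = b / s` where `s`, `b` are integral over the base and `s` is a unit.
The denominator `s` is one of the elements produced by Horner's scheme. -/
lemma exists_denominator_aux {z : M} (hz : w z ≤ 1) (n : ℕ) : ∀ f : M[X], f.natDegree ≤ n →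
    (∀ i, IsIntegral (integersIn w E) (f.coeff i)) → f.eval z = 0 → (∃ i, w (f.coeff i) = 1) →
    ∃ s b, IsIntegral (integersIn w E) s ∧ IsIntegral (integersIn w E) b ∧ w s = 1 ∧
      s * z = b := by
  induction n with
  | zero =>
    rintro f hdeg hintg h0 ⟨i, hi⟩
    rw [eq_C_of_natDegree_le_zero hdeg] at h0 hi
    rw [eval_C] at h0
    simp [h0] at hi
  | succ n ih =>
    rintro f hdeg hintg h0 ⟨i, hi⟩
    rcases Nat.lt_or_ge f.natDegree (n + 1) with hlt | hge
    · exact ih f (by omega) hintg h0 ⟨i, hi⟩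
    have hdeg' : f.natDegree = n + 1 := le_antisymm hdeg hge
    have hlc : f.leadingCoeff = f.coeff (n + 1) := by rw [leadingCoeff, hdeg']
    have hlz := isIntegral_coeff_mul hintg h0
    rw [hlc] at hlz
    by_cases h1 : w (f.coeff (n + 1)) = 1
    · exact ⟨_, _, hintg _, hlz, h1, rfl⟩
    have h1' : w (f.coeff (n + 1)) < 1 := lt_of_le_of_ne (le_one_of_isIntegral (hintg _)) h1
    have hlt1 : w (f.coeff (n + 1) * z) < 1 := by
      rw [map_mul]; exact mul_lt_one_of_lt_of_le h1' hz
    let g : M[X] := f.eraseLead + C (f.coeff (n + 1) * z) * X ^ n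
    have hgc : ∀ j, g.coeff j = (if j = n + 1 then 0 else f.coeff j) +
        (if j = n then f.coeff (n + 1) * z else 0) := by
      intro j
      rw [coeff_add, coeff_C_mul_X_pow, eraseLead_coeff, hdeg']
    have hgd : g.natDegree ≤ n := by
      refine natDegree_add_le_of_degree_le ?_ (natDegree_C_mul_X_pow_le _ _)
      have := eraseLead_natDegree_le f
      omega
    refine ih g hgd ?_ ?_ ?_
    · intro j
      rw [hgc]
      refine IsIntegral.add ?_ ?_
      · split_ifs
        exacts [isIntegral_zero, hintg j]
      · split_ifs
        exacts [hlz, isIntegral_zero]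
    · have := eraseLead_add_C_mul_X_pow f
      rw [hlc, hdeg'] at this
      rw [← this] at h0
      simp only [eval_add, eval_mul, eval_C, eval_pow, eval_X, g] at h0 ⊢
      rw [← h0]; ring
    · have hin : i ≠ n + 1 := by rintro rfl; exact h1 hi
      refine ⟨i, ?_⟩
      rw [hgc, if_neg hin]
      split_ifs with hin'
      · rw [Valuation.map_add_eq_of_lt_left _ (by rw [hi]; exact hlt1), hi]
      · rw [add_zero, hi]

lemma exists_poly_of_isAlgebraic {z : M} (hz : IsAlgebraic E z) :
    ∃ f : M[X], f ≠ 0 ∧ (∀ i, f.coeff i ∈ E) ∧ f.eval z = 0 := by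
  obtain ⟨p, hp, h0⟩ := hz
  refine ⟨p.map (algebraMap E M),
    (Polynomial.map_ne_zero_iff (algebraMap E M).injective).2 hp, ?_, ?_⟩
  · intro i; rw [coeff_map]; exact (p.coeff i).2
  · rwa [eval_map_algebraMap]

/-- An algebraic element of value at most one is a quotient of elements integral over the valuation
ring of `E`, the denominator being a unit. -/
lemma exists_denominator {z : M} (hz : IsAlgebraic E z) (hz1 : w z ≤ 1) :
    ∃ s b, IsIntegral (integersIn w E) s ∧ IsIntegral (integersIn w E) b ∧ w s = 1 ∧
      s * z = b := by
  obtain ⟨f, hf, hc, h0⟩ := exists_poly_of_isAlgebraic hz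
  obtain ⟨j, hj, hmax⟩ := f.support.exists_max_image (fun i => w (f.coeff i))
    (support_nonempty.2 hf)
  have hcj : f.coeff j ≠ 0 := mem_support_iff.1 hj
  have hwj : w (f.coeff j) ≠ 0 := (w.ne_zero_iff).2 hcj
  have hle : ∀ i, w (f.coeff i) ≤ w (f.coeff j) := by
    intro i
    by_cases hi : i ∈ f.support
    · exact hmax i hi
    · rw [notMem_support_iff.1 hi, map_zero]; exact zero_le
  refine exists_denominator_aux (E := E) hz1 _ (C (f.coeff j)⁻¹ * f) le_rfl ?_ ?_ ⟨j, ?_⟩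
  · intro i
    rw [coeff_C_mul]
    have : (f.coeff j)⁻¹ * f.coeff i ∈ integersIn w E := by
      refine mem_integersIn.2 ⟨?_, E.mul_mem (E.inv_mem (hc j)) (hc i)⟩
      rw [map_mul, map_inv₀]
      calc (w (f.coeff j))⁻¹ * w (f.coeff i) ≤ (w (f.coeff j))⁻¹ * w (f.coeff j) := by
            gcongr; exact hle i
        _ = 1 := inv_mul_cancel₀ hwj
    exact isIntegral_algebraMap (x := (⟨_, this⟩ : integersIn w E))
  · simp [h0]
  · rw [coeff_C_mul, inv_mul_cancel₀ hcj, map_one]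

/-- The value group of an algebraic extension is torsion modulo the value group of the base:
in an algebraic relation two terms have the same value. -/
lemma exists_pow_eq {y : M} (hy : IsAlgebraic E y) (hy0 : y ≠ 0) :
    ∃ n : ℕ, n ≠ 0 ∧ ∃ d ∈ E, w y ^ n = w d := by
  obtain ⟨f, hf, hc, h0⟩ := exists_poly_of_isAlgebraic hy
  obtain ⟨j, hj, hmax⟩ := f.support.exists_max_image (fun i => w (f.coeff i * y ^ i))
    (support_nonempty.2 hf)
  have hwy : w y ≠ 0 := (w.ne_zero_iff).2 hy0
  have hne : ∀ i ∈ f.support, w (f.coeff i) ≠ 0 := fun i hi =>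
    (w.ne_zero_iff).2 (mem_support_iff.1 hi)
  have hex : ∃ i ∈ f.support, i ≠ j ∧ w (f.coeff i * y ^ i) = w (f.coeff j * y ^ j) := by
    by_contra! hno
    have hlt : ∀ i ∈ f.support \ {j}, w (f.coeff i * y ^ i) < w (f.coeff j * y ^ j) := by
      intro i hi
      rw [Finset.mem_sdiff, Finset.mem_singleton] at hi
      exact lt_of_le_of_ne (hmax i hi.1) (hno i hi.1 hi.2)
    have := w.map_sum_eq_of_lt hj hlt
    rw [eval_eq_sum, sum_def] at h0
    rw [h0, map_zero, map_mul, map_pow] at this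
    exact mul_ne_zero (hne j hj) (pow_ne_zero _ hwy) this.symm
  obtain ⟨i, hi, hij, heq⟩ := hex
  rw [map_mul, map_mul, map_pow, map_pow] at heq
  have main : ∀ i j, i < j → w (f.coeff i) ≠ 0 → w (f.coeff j) ≠ 0 →
      w (f.coeff i) * w y ^ i = w (f.coeff j) * w y ^ j →
      ∃ n : ℕ, n ≠ 0 ∧ ∃ d ∈ E, w y ^ n = w d := by
    intro i j hlt hi hj heq
    refine ⟨j - i, by omega, f.coeff i / f.coeff j, E.div_mem (hc i) (hc j), ?_⟩
    obtain ⟨k, rfl⟩ := Nat.exists_eq_add_of_lt hlt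
    rw [map_div₀, eq_div_iff hj, show i + k + 1 - i = k + 1 by omega]
    have hp : w y ^ i ≠ 0 := pow_ne_zero _ hwy
    apply mul_right_cancel₀ hp
    rw [heq, mul_right_comm, ← pow_add, mul_comm, show k + 1 + i = i + k + 1 by omega]
  rcases lt_or_gt_of_ne hij with h | h
  · exact main i j h (hne i hi) (hne j hj) heq
  · exact main j i h (hne j hj) (hne i hi) heq.symm

/-- Up to a factor `d` from `E`, some power of an algebraic element `y` is a quotient `b / s` of
elements integral over the valuation ring of `E`, with `s` a unit. -/
lemma exists_decomposition {y : M} (hy : IsAlgebraic E y) :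
    ∃ (n : ℕ) (d s b : M), n ≠ 0 ∧ d ∈ E ∧ w y ^ n = w d ∧ IsIntegral (integersIn w E) s ∧
      IsIntegral (integersIn w E) b ∧ w s = 1 ∧ s * y ^ n = b * d := by
  by_cases hy0 : y = 0
  · exact ⟨1, 0, 1, 1, one_ne_zero, E.zero_mem, by simp [hy0], isIntegral_one, isIntegral_one,
      map_one w, by simp [hy0]⟩
  obtain ⟨n, hn, d, hd, hw⟩ := exists_pow_eq (w := w) hy hy0
  have hwy : w y ≠ 0 := (w.ne_zero_iff).2 hy0
  have hd0 : d ≠ 0 := by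
    rintro rfl
    rw [map_zero] at hw
    exact pow_ne_zero _ hwy hw
  have hz : IsAlgebraic E (y ^ n / d) := by
    rw [div_eq_mul_inv]
    exact (hy.pow n).mul (isAlgebraic_algebraMap (⟨d, hd⟩ : E)).inv
  obtain ⟨s, b, hs, hb, hs1, hsb⟩ := exists_denominator (w := w) hz
    (by rw [map_div₀, map_pow, hw, div_self]; exact (w.ne_zero_iff).2 hd0)
  refine ⟨n, d, s, b, hn, hd, hw, hs, hb, hs1, ?_⟩
  rw [← hsb]; field_simp

/-- The minimal polynomial over `E` of a unit that is integral over the valuation ring of `E`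
has integral coefficients, one of the non-leading ones being a unit. -/
lemma exists_minpoly [IsAlgClosed M] {s : M} (hs : IsIntegral (integersIn w E) s) (hs1 : w s = 1) :
    ∃ μ : M[X], μ.Monic ∧ (∀ i, w (μ.coeff i) ≤ 1 ∧ μ.coeff i ∈ E) ∧ μ.eval s = 0 ∧
      (∃ i < μ.natDegree, w (μ.coeff i) = 1) ∧
      ∀ p : M[X], (∀ i, p.coeff i ∈ E) → p.eval s = 0 → μ ∣ p := by
  obtain ⟨f, hf, hc, h0⟩ := exists_poly_of_isIntegral hs
  have hlift : ∀ p : M[X], (∀ i, p.coeff i ∈ E) → p ∈ lifts (algebraMap E M) := by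
    intro p hp
    rw [lifts_iff_coeff_lifts]
    exact fun i => ⟨⟨p.coeff i, hp i⟩, rfl⟩
  obtain ⟨q, hq, -, hqm⟩ := lifts_and_natDegree_eq_and_monic (hlift f fun i => (hc i).2) hf
  have hq0 : aeval s q = 0 := by rw [← eval_map_algebraMap, hq, h0]
  have hintg : IsIntegral E s := ⟨q, hqm, hq0⟩
  obtain ⟨μ, hμ⟩ : ∃ μ, μ = (minpoly E s).map (algebraMap E M) := ⟨_, rfl⟩
  have hμm : μ.Monic := hμ ▸ (minpoly.monic hintg).map _
  have hμE : ∀ i, μ.coeff i ∈ E := fun i => by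
    rw [hμ, coeff_map]; exact ((minpoly E s).coeff i).2
  have hμ0 : μ.eval s = 0 := by rw [hμ, eval_map_algebraMap, minpoly.aeval]
  have hdvd : ∀ p : M[X], (∀ i, p.coeff i ∈ E) → p.eval s = 0 → μ ∣ p := by
    intro p hp hp0
    obtain ⟨p', rfl⟩ := (mem_lifts _).1 (hlift p hp)
    rw [hμ]
    exact Polynomial.map_dvd _ (minpoly.dvd E s (by rwa [eval_map_algebraMap] at hp0))
  have hprod : μ = (μ.roots.map (fun a => X - C a)).prod := by
    have := (IsAlgClosed.splits μ).eq_prod_roots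
    rwa [hμm.leadingCoeff, C_1, one_mul] at this
  have hle : ∀ i, w (μ.coeff i) ≤ 1 := by
    intro i
    rw [hprod]
    refine coeff_prod_le w _ (fun a ha => ?_) i
    refine root_le_one w hf (fun i => (hc i).1) ?_
    exact eval_eq_zero_of_dvd_of_eval_eq_zero (hdvd f (fun i => (hc i).2) h0)
      ((mem_roots hμm.ne_zero).1 ha)
  refine ⟨μ, hμm, fun i => ⟨hle i, hμE i⟩, hμ0, ?_, hdvd⟩
  by_contra! hno
  rw [eval_eq_sum_range, Finset.sum_range_succ, hμm.coeff_natDegree, one_mul,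
    add_eq_zero_iff_eq_neg] at hμ0
  have hlt : w (∑ i ∈ Finset.range μ.natDegree, μ.coeff i * s ^ i) < 1 := by
    refine w.map_sum_lt one_ne_zero fun i hi => ?_
    rw [map_mul, map_pow, hs1, one_pow, mul_one]
    exact lt_of_le_of_ne (hle i) (hno i (Finset.mem_range.1 hi))
  rw [hμ0, Valuation.map_neg, map_pow, hs1, one_pow] at hlt
  exact hlt.false

end

end TropVal

/-! ### Approximation by homomorphisms: algebraic extensions -/

namespace TropVal
open Polynomial

section
variable {K L M Γ : Type*} [Field K] [Field L] [Field M] [Algebra K L] [Algebra K M]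
  [LinearOrderedCommGroupWithZero Γ]

/-- The graph of a homomorphism to `L` from a subalgebra of `M`. -/
def graph {P : Subalgebra K M} (φ : P →ₐ[K] L) : Subalgebra K (M × L) := (P.val.prod φ).range

lemma mem_graph {P : Subalgebra K M} {φ : P →ₐ[K] L} {x : M} {y : L} :
    (x, y) ∈ graph φ ↔ ∃ h : x ∈ P, φ ⟨x, h⟩ = y := by
  constructor
  · rintro ⟨p, hp⟩
    obtain ⟨h1, h2⟩ := Prod.ext_iff.1 hp
    change (p : M) = x at h1
    change φ p = y at h2
    subst h1
    exact ⟨p.2, h2⟩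
  · rintro ⟨h, rfl⟩
    exact ⟨⟨x, h⟩, rfl⟩

section graph
variable {P : Subalgebra K M} {φ : P →ₐ[K] L}

lemma graph_unique {x : M} {y y' : L} (h : (x, y) ∈ graph φ) (h' : (x, y') ∈ graph φ) :
    y = y' := by
  obtain ⟨h, rfl⟩ := mem_graph.1 h
  obtain ⟨h', rfl⟩ := mem_graph.1 h'
  rfl

lemma graph_mul {x x' : M} {y y' : L} (h : (x, y) ∈ graph φ) (h' : (x', y') ∈ graph φ) :
    (x * x', y * y') ∈ graph φ := (graph φ).mul_mem h h'

lemma graph_add {x x' : M} {y y' : L} (h : (x, y) ∈ graph φ) (h' : (x', y') ∈ graph φ) :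
    (x + x', y + y') ∈ graph φ := (graph φ).add_mem h h'

lemma graph_sub {x x' : M} {y y' : L} (h : (x, y) ∈ graph φ) (h' : (x', y') ∈ graph φ) :
    (x - x', y - y') ∈ graph φ := (graph φ).sub_mem h h'

lemma graph_pow {x : M} {y : L} (h : (x, y) ∈ graph φ) (n : ℕ) :
    (x ^ n, y ^ n) ∈ graph φ := (graph φ).pow_mem h n

lemma graph_one : ((1 : M), (1 : L)) ∈ graph φ := (graph φ).one_mem

lemma graph_zero : ((0 : M), (0 : L)) ∈ graph φ := (graph φ).zero_mem

lemma graph_sum {I : Type*} (s : Finset I) {x : I → M} {y : I → L}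
    (h : ∀ i ∈ s, (x i, y i) ∈ graph φ) : (∑ i ∈ s, x i, ∑ i ∈ s, y i) ∈ graph φ := by
  have := (graph φ).sum_mem h
  convert this using 1
  exact Prod.ext (by simp [Prod.fst_sum]) (by simp [Prod.snd_sum])

lemma graph_prod {I : Type*} (s : Finset I) {x : I → M} {y : I → L}
    (h : ∀ i ∈ s, (x i, y i) ∈ graph φ) : (∏ i ∈ s, x i, ∏ i ∈ s, y i) ∈ graph φ := by
  have := (graph φ).prod_mem h
  convert this using 1
  exact Prod.ext (by simp [Prod.fst_prod]) (by simp [Prod.snd_prod])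

lemma graph_multiset_prod {I : Type*} (s : Multiset I) {x : I → M} {y : I → L}
    (h : ∀ i ∈ s, (x i, y i) ∈ graph φ) :
    ((s.map x).prod, (s.map y).prod) ∈ graph φ := by
  induction s using Multiset.induction_on with
  | empty => simpa using graph_one
  | cons a s ih =>
    rw [Multiset.map_cons, Multiset.map_cons, Multiset.prod_cons, Multiset.prod_cons]
    exact graph_mul (h a (Multiset.mem_cons_self a s))
      (ih fun i hi => h i (Multiset.mem_cons_of_mem hi))

/-- A homomorphism extends to the ring obtained by inverting the elements not in its kernel. -/
lemma exists_extend_inv (φ : P →ₐ[K] L) :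
    ∃ (B : Subalgebra K M) (φ' : B →ₐ[K] L), graph φ ≤ graph φ' ∧
      ∀ x y, (x, y) ∈ graph φ → y ≠ 0 → (x⁻¹, y⁻¹) ∈ graph φ' := by
  obtain ⟨B, φ', h⟩ := exists_fraction_hom P.val φ
    (fun p hp => by
      have : p = 0 := Subtype.ext hp
      rw [this, map_zero])
  refine ⟨B, φ', ?_, ?_⟩
  · rintro ⟨x, y⟩ hxy
    obtain ⟨hx, rfl⟩ := mem_graph.1 hxy
    have := mem_graph.2 (h ⟨x, hx⟩ 1 (by simp))
    simpa using this
  · intro x y hxy hy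
    obtain ⟨hx, rfl⟩ := mem_graph.1 hxy
    have := mem_graph.2 (h 1 ⟨x, hx⟩ hy)
    simpa using this

/-- Extending a homomorphism by sending a further element `S` to a prescribed element `s`. -/
lemma exists_extend_eval (φ : P →ₐ[K] L) (S : M) (s : L)
    (hker : ∀ p : P[X], (p.map (P.val : P →+* M)).eval S = 0 →
      (p.map (φ : P →+* L)).eval s = 0) :
    ∃ (B : Subalgebra K M) (φ' : B →ₐ[K] L), graph φ ≤ graph φ' ∧ (S, s) ∈ graph φ' := by
  let α : P[X] →ₐ[K] M := eval₂AlgHom P.val S (fun _ => Commute.all _ _)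
  let β : P[X] →ₐ[K] L := eval₂AlgHom φ s (fun _ => Commute.all _ _)
  have hα : ∀ p, α p = (p.map (P.val : P →+* M)).eval S := fun p => (eval_map _ _).symm
  have hβ : ∀ p, β p = (p.map (φ : P →+* L)).eval s := fun p => (eval_map _ _).symm
  obtain ⟨B, φ', h⟩ := exists_fraction_hom α β (fun p hp => by
    rw [hβ]; exact hker p (by rw [← hα]; exact hp))
  refine ⟨B, φ', ?_, ?_⟩
  · rintro ⟨x, y⟩ hxy
    obtain ⟨hx, rfl⟩ := mem_graph.1 hxy
    have := mem_graph.2 (h (C ⟨x, hx⟩) 1 (by simp))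
    simpa [hα, hβ] using this
  · have := mem_graph.2 (h X 1 (by simp))
    simpa [hα, hβ] using this

lemma exists_extend_integral [IsAlgClosed L] (φ : P →ₐ[K] L) :
    ∃ (B : Subalgebra K M) (φ' : B →ₐ[K] L), graph φ ≤ graph φ' ∧
      ∀ x, IsIntegral P x → ∃ y, (x, y) ∈ graph φ' := by
  obtain ⟨ψ, hψ⟩ := exists_lift_integralClosure P φ
  refine ⟨(integralClosure P M).restrictScalars K, ψ, ?_, ?_⟩
  · rintro ⟨x, y⟩ hxy
    obtain ⟨hx, rfl⟩ := mem_graph.1 hxy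
    refine mem_graph.2 ⟨?_, hψ ⟨x, hx⟩⟩
    exact isIntegral_algebraMap (x := (⟨x, hx⟩ : P))
  · intro x hx
    exact ⟨ψ ⟨x, hx⟩, mem_graph.2 ⟨hx, rfl⟩⟩

end graph

/-- Integrality of `x` over the valuation ring of `E` is witnessed by a finite set `T`: a
homomorphism which is integral on `T` is integral at `x`. -/
lemma exists_finset_of_isIntegral {w : Valuation M Γ} {E : IntermediateField K M}
    (v : Valuation L NNReal)
    {x : M} (hx : IsIntegral (integersIn w E) x) :
    ∃ T : Finset M, (∀ a ∈ T, w a ≤ 1 ∧ a ∈ E) ∧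
      ∀ (P : Subalgebra K M) (φ : P →ₐ[K] L), (∀ a ∈ T, ∃ c, (a, c) ∈ graph φ ∧ v c ≤ 1) →
        IsIntegral P x ∧ ∀ (B : Subalgebra K M) (φ' : B →ₐ[K] L), graph φ ≤ graph φ' →
          ∀ y, (x, y) ∈ graph φ' → v y ≤ 1 := by
  classical
  obtain ⟨f, hf, hc, h0⟩ := exists_poly_of_isIntegral hx
  refine ⟨insert 0 (f.support.image f.coeff), ?_, ?_⟩
  · intro a ha
    rcases Finset.mem_insert.1 ha with rfl | ha
    · simp
    · obtain ⟨i, -, rfl⟩ := Finset.mem_image.1 ha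
      exact hc i
  intro P φ hT
  have hT' : ∀ i, ∃ c, (f.coeff i, c) ∈ graph φ ∧ v c ≤ 1 := by
    intro i
    refine hT _ (Finset.mem_insert.2 ?_)
    by_cases hi : i ∈ f.support
    · exact Or.inr (Finset.mem_image_of_mem _ hi)
    · exact Or.inl (notMem_support_iff.1 hi)
  choose c hcg hcv using hT'
  constructor
  · have hl : f ∈ lifts (algebraMap P M) := by
      rw [lifts_iff_coeff_lifts]
      exact fun i => ⟨⟨f.coeff i, (mem_graph.1 (hcg i)).1⟩, rfl⟩
    obtain ⟨q, hq, -, hqm⟩ := lifts_and_natDegree_eq_and_monic hl hf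
    exact ⟨q, hqm, by rw [← eval_map, hq, h0]⟩
  · intro B φ' hle y hy
    have hsum := graph_sum (Finset.range f.natDegree)
      fun i _ => graph_mul (hle (hcg i)) (graph_pow hy i)
    have hsum' := graph_add hsum (graph_pow hy f.natDegree)
    rw [eval_eq_sum_range, Finset.sum_range_succ, hf.coeff_natDegree, one_mul] at h0
    rw [h0] at hsum'
    exact root_le_one_sum v _ hcv (graph_unique hsum' graph_zero)

/-- Finitely many elements of `E`, together with finitely many upper bounds for their values by
real numbers, can be realized in `L`: there is a `K`-homomorphism to `L` which is defined at these
elements and preserves the bounds that hold. -/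
def HasApprox (v : Valuation L NNReal) (w : Valuation M Γ) (ι : NNReal →*₀ Γ)
    (E : IntermediateField K M) : Prop :=
  ∀ Q : Set (M × NNReal), Q.Finite → (∀ q ∈ Q, q.1 ∈ E ∧ q.2 ≠ 0) →
    ∃ (P : Subalgebra K M) (φ : P →ₐ[K] L), P ≤ E.toSubalgebra ∧
      ∀ q ∈ Q, ∃ y, (q.1, y) ∈ graph φ ∧ (w q.1 ≤ ι q.2 → v y ≤ q.2)

/-- The containment of the domain in `E` required by `HasApprox` can always be achieved by
restriction. -/
lemma hasApprox_of {v : Valuation L NNReal} {w : Valuation M Γ} {ι : NNReal →*₀ Γ}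
    {E : IntermediateField K M}
    (H : ∀ Q : Set (M × NNReal), Q.Finite → (∀ q ∈ Q, q.1 ∈ E ∧ q.2 ≠ 0) →
    ∃ (P : Subalgebra K M) (φ : P →ₐ[K] L),
      ∀ q ∈ Q, ∃ y, (q.1, y) ∈ graph φ ∧ (w q.1 ≤ ι q.2 → v y ≤ q.2)) : HasApprox v w ι E := by
  intro Q hQ hQE
  obtain ⟨P, φ, h⟩ := H Q hQ hQE
  refine ⟨P ⊓ E.toSubalgebra, φ.comp (Subalgebra.inclusion inf_le_left), inf_le_right, ?_⟩
  intro q hq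
  obtain ⟨y, hy, hle⟩ := h q hq
  obtain ⟨hP, rfl⟩ := mem_graph.1 hy
  exact ⟨_, mem_graph.2 ⟨⟨hP, (hQE q hq).1⟩, rfl⟩, hle⟩

lemma HasApprox.mono {v : Valuation L NNReal} {w : Valuation M Γ} {ι : NNReal →*₀ Γ}
    {E E' : IntermediateField K M} (h : HasApprox v w ι E) (hle : E' ≤ E) :
    HasApprox v w ι E' := by
  refine hasApprox_of fun Q hQ hQE => ?_
  obtain ⟨P, φ, -, h⟩ := h Q hQ (fun q hq => ⟨hle (hQE q hq).1, (hQE q hq).2⟩)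
  exact ⟨P, φ, h⟩

/-- Extending a homomorphism `φ`, defined on a subring of `E` containing the coefficients of the
minimal polynomial `μ` of `S` and integral there, to a homomorphism sending `S` to a unit. -/
lemma exists_extend_root [IsAlgClosed L] {E : IntermediateField K M} (v : Valuation L NNReal)
    {P : Subalgebra K M} (φ : P →ₐ[K] L) (hPE : P ≤ E.toSubalgebra) {S : M} {μ : M[X]}
    (hμ : μ.Monic) (hmin : ∀ p : M[X], (∀ i, p.coeff i ∈ E) → p.eval S = 0 → μ ∣ p)
    (hc : ∀ i, ∃ c, (μ.coeff i, c) ∈ graph φ ∧ v c ≤ 1)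
    (hi : ∃ i < μ.natDegree, ∃ c, (μ.coeff i, c) ∈ graph φ ∧ v c = 1) :
    ∃ (B : Subalgebra K M) (φ' : B →ₐ[K] L) (s : L), graph φ ≤ graph φ' ∧ (S, s) ∈ graph φ' ∧
      v s = 1 := by
  have hl : μ ∈ lifts (P.val : P →+* M) := by
    rw [lifts_iff_coeff_lifts]
    intro i
    obtain ⟨c, h, -⟩ := hc i
    exact ⟨⟨μ.coeff i, (mem_graph.1 h).1⟩, rfl⟩
  obtain ⟨q, hq, hqd, hqm⟩ := lifts_and_natDegree_eq_and_monic hl hμ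
  have hcoeff : ∀ i c, (μ.coeff i, c) ∈ graph φ → (q.map (φ : P →+* L)).coeff i = c := by
    intro i c h
    refine graph_unique (φ := φ) (x := μ.coeff i) ?_ h
    rw [coeff_map, ← hq, coeff_map]
    exact mem_graph.2 ⟨(q.coeff i).2, rfl⟩
  have hdeg : (q.map (φ : P →+* L)).natDegree = μ.natDegree := by
    rw [hqm.natDegree_map, hqd]
  obtain ⟨s, hs0, hs1⟩ := exists_unit_root v (hqm.map (φ : P →+* L))
    (fun i => by
      obtain ⟨c, h, h1⟩ := hc i
      rw [hcoeff i c h]; exact h1)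
    (by
      obtain ⟨i, hi, c, h, h1⟩ := hi
      exact ⟨i, by rwa [hdeg], by rw [hcoeff i c h]; exact h1⟩)
  obtain ⟨B, φ', hle, hS⟩ := exists_extend_eval φ S s (fun p hp => by
    have h1 : μ ∣ p.map (P.val : P →+* M) :=
      hmin _ (fun i => by rw [coeff_map]; exact hPE (p.coeff i).2) hp
    have h2 : p %ₘ q = 0 := by
      rw [← (modByMonic_eq_zero_iff_dvd hμ), ← hq, ← map_modByMonic _ hqm] at h1
      exact (Polynomial.map_eq_zero_iff Subtype.val_injective).1 h1
    rw [modByMonic_eq_zero_iff_dvd hqm] at h2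
    exact eval_eq_zero_of_dvd_of_eval_eq_zero (Polynomial.map_dvd _ h2) hs0)
  exact ⟨B, φ', s, hle, hS, hs1⟩

/-- Approximability passes to the algebraic closure. -/
lemma HasApprox.algebraicClosure [IsAlgClosed L] [IsAlgClosed M] {v : Valuation L NNReal}
    {w : Valuation M Γ} {ι : NNReal →*₀ Γ} {E : IntermediateField K M} (h : HasApprox v w ι E) :
    HasApprox v w ι ((algebraicClosure E M).restrictScalars K) := by
  classical
  refine hasApprox_of fun Q hQ hQE => ?_
  lift Q to Finset (M × NNReal) using hQ
  have hdec : ∀ q : M × NNReal, ∃ (n : ℕ) (d s b : M), q ∈ Q → n ≠ 0 ∧ d ∈ E ∧ w q.1 ^ n = w d ∧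
      IsIntegral (integersIn w E) s ∧ IsIntegral (integersIn w E) b ∧ w s = 1 ∧
      s * q.1 ^ n = b * d := by
    intro q
    by_cases hq : q ∈ Q
    · obtain ⟨n, d, s, b, H⟩ := exists_decomposition (w := w)
        (mem_algebraicClosure_iff.1 (hQE q hq).1)
      exact ⟨n, d, s, b, fun _ => H⟩
    · exact ⟨0, 0, 0, 0, fun h => absurd h hq⟩
  choose n d s b hdec using hdec
  have hT : ∀ q : M × NNReal, ∃ T T' : Finset M, q ∈ Q →
      ((∀ a ∈ T, w a ≤ 1 ∧ a ∈ E) ∧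
      ∀ (P : Subalgebra K M) (φ : P →ₐ[K] L), (∀ a ∈ T, ∃ c, (a, c) ∈ graph φ ∧ v c ≤ 1) →
        IsIntegral P (s q) ∧ ∀ (B : Subalgebra K M) (φ' : B →ₐ[K] L), graph φ ≤ graph φ' →
          ∀ y, (s q, y) ∈ graph φ' → v y ≤ 1) ∧
      ((∀ a ∈ T', w a ≤ 1 ∧ a ∈ E) ∧
      ∀ (P : Subalgebra K M) (φ : P →ₐ[K] L), (∀ a ∈ T', ∃ c, (a, c) ∈ graph φ ∧ v c ≤ 1) →
        IsIntegral P (b q) ∧ ∀ (B : Subalgebra K M) (φ' : B →ₐ[K] L), graph φ ≤ graph φ' →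
          ∀ y, (b q, y) ∈ graph φ' → v y ≤ 1) := by
    intro q
    by_cases hq : q ∈ Q
    · obtain ⟨-, -, -, hs, hb, -, -⟩ := hdec q hq
      obtain ⟨T, hT⟩ := exists_finset_of_isIntegral v hs
      obtain ⟨T', hT'⟩ := exists_finset_of_isIntegral v hb
      exact ⟨T, T', fun _ => ⟨hT, hT'⟩⟩
    · exact ⟨∅, ∅, fun h => absurd h hq⟩
  choose T T' hT using hT
  -- It is enough to send the product of the `s q` to a unit, as each `s q` has an integral image.
  have hS : IsIntegral (integersIn w E) (∏ q ∈ Q, s q) :=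
    IsIntegral.prod _ fun q hq => (hdec q hq).2.2.2.1
  have hS1 : w (∏ q ∈ Q, s q) = 1 := by
    rw [map_prod]
    exact Finset.prod_eq_one fun q hq => (hdec q hq).2.2.2.2.2.1
  obtain ⟨μ, hμm, hμc, hμ0, ⟨i₀, hi₀, hi₀1⟩, hmin⟩ := exists_minpoly hS hS1
  -- the finitely many conditions on the homomorphism on `E`
  let Q' : Finset (M × NNReal) :=
    (Finset.range (μ.natDegree + 2)).image (fun i => (μ.coeff i, 1)) ∪
    {((μ.coeff i₀)⁻¹, 1)} ∪ Q.image (fun q => (d q, q.2 ^ n q)) ∪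
    (Q.biUnion fun q => T q ∪ T' q).image (fun a => (a, 1))
  obtain ⟨P, φ, hPE, hφ⟩ := h Q' Q'.finite_toSet (by
    intro q' hq'
    simp only [Q', Finset.coe_union, Set.mem_union, Finset.mem_coe, Finset.mem_image,
      Finset.mem_singleton, Finset.mem_biUnion, Finset.mem_union] at hq'
    rcases hq' with ((⟨i, -, rfl⟩ | rfl) | ⟨q, hq, rfl⟩) | ⟨a, ⟨q, hq, ha⟩, rfl⟩
    · exact ⟨(hμc i).2, one_ne_zero⟩
    · exact ⟨E.inv_mem (hμc i₀).2, one_ne_zero⟩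
    · exact ⟨(hdec q hq).2.1, pow_ne_zero _ (hQE q hq).2⟩
    · refine ⟨?_, one_ne_zero⟩
      rcases ha with ha | ha
      · exact ((hT q hq).1.1 a ha).2
      · exact ((hT q hq).2.1 a ha).2)
  have hφ1 : ∀ a, (a, 1) ∈ Q' → w a ≤ 1 → ∃ c, (a, c) ∈ graph φ ∧ v c ≤ 1 := by
    intro a ha hwa
    obtain ⟨y, hy, hle⟩ := hφ (a, 1) ha
    exact ⟨y, hy, hle (by rwa [map_one])⟩
  have hμφ : ∀ i, ∃ c, (μ.coeff i, c) ∈ graph φ ∧ v c ≤ 1 := by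
    intro i
    by_cases hi : i ≤ μ.natDegree
    · refine hφ1 _ ?_ (hμc i).1
      simp only [Q', Finset.mem_union, Finset.mem_image, Finset.mem_range]
      exact Or.inl (Or.inl (Or.inl ⟨i, by omega, rfl⟩))
    · rw [coeff_eq_zero_of_natDegree_lt (by omega)]
      exact ⟨0, graph_zero, by simp⟩
  have hμu : ∃ c, (μ.coeff i₀, c) ∈ graph φ ∧ v c = 1 := by
    obtain ⟨c, hc, hc1⟩ := hμφ i₀
    obtain ⟨c', hc', hc1'⟩ := hφ1 (μ.coeff i₀)⁻¹ (by simp [Q']) (by rw [map_inv₀, hi₀1, inv_one])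
    refine ⟨c, hc, le_antisymm hc1 ?_⟩
    have hne : μ.coeff i₀ ≠ 0 := by
      intro h0
      rw [h0, map_zero] at hi₀1
      exact zero_ne_one hi₀1
    have h1 := graph_mul hc hc'
    rw [mul_inv_cancel₀ hne] at h1
    have h2 : c * c' = 1 := graph_unique h1 graph_one
    calc (1 : NNReal) = v c * v c' := by rw [← map_mul, h2, map_one]
      _ ≤ v c * 1 := by gcongr
      _ = v c := mul_one _
  obtain ⟨P₁, φ₁, S', hle₁, hS', hS'1⟩ := exists_extend_root v φ hPE hμm hmin hμφ ⟨i₀, hi₀, hμu⟩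
  obtain ⟨P₂, φ₂, hle₂, hintg⟩ := exists_extend_integral φ₁
  obtain ⟨P₃, φ₃, hle₃, hinv⟩ := exists_extend_inv φ₂
  have hTφ : ∀ q ∈ Q, ∀ a ∈ T q, ∃ c, (a, c) ∈ graph φ₁ ∧ v c ≤ 1 := by
    intro q hq a ha
    obtain ⟨c, hc, h1⟩ := hφ1 a (by
      simp only [Q', Finset.mem_union, Finset.mem_image, Finset.mem_biUnion]
      exact Or.inr ⟨a, ⟨q, hq, Or.inl ha⟩, rfl⟩) ((hT q hq).1.1 a ha).1
    exact ⟨c, hle₁ hc, h1⟩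
  have hTφ' : ∀ q ∈ Q, ∀ a ∈ T' q, ∃ c, (a, c) ∈ graph φ₁ ∧ v c ≤ 1 := by
    intro q hq a ha
    obtain ⟨c, hc, h1⟩ := hφ1 a (by
      simp only [Q', Finset.mem_union, Finset.mem_image, Finset.mem_biUnion]
      exact Or.inr ⟨a, ⟨q, hq, Or.inr ha⟩, rfl⟩) ((hT q hq).2.1 a ha).1
    exact ⟨c, hle₁ hc, h1⟩
  have hσ : ∀ q, ∃ σ, q ∈ Q → (s q, σ) ∈ graph φ₂ ∧ v σ ≤ 1 := by
    intro q
    by_cases hq : q ∈ Q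
    · obtain ⟨hi, hb⟩ := (hT q hq).1.2 P₁ φ₁ (hTφ q hq)
      obtain ⟨σ, hσ⟩ := hintg _ hi
      exact ⟨σ, fun _ => ⟨hσ, hb _ _ hle₂ _ hσ⟩⟩
    · exact ⟨0, fun h => absurd h hq⟩
  choose σ hσ using hσ
  have hσ1 : ∀ q ∈ Q, v (σ q) = 1 := by
    have h1 := graph_unique (graph_prod Q fun q hq => (hσ q hq).1) (hle₂ hS')
    have h2 : ∏ q ∈ Q, v (σ q) = 1 := by rw [← map_prod, h1, hS'1]
    exact (Finset.prod_eq_one_iff_of_le_one' fun q hq => (hσ q hq).2).1 h2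
  refine ⟨P₃, φ₃, fun q hq => ?_⟩
  rw [Finset.mem_coe] at hq
  obtain ⟨hn, hdE, hwd, -, -, hws, heq⟩ := hdec q hq
  obtain ⟨δ, hδ, hδle⟩ := hφ (d q, q.2 ^ n q) (by
    simp only [Q', Finset.coe_union, Set.mem_union, Finset.mem_coe, Finset.mem_image]
    exact Or.inl (Or.inr ⟨q, hq, rfl⟩))
  obtain ⟨hsi, -⟩ := (hT q hq).1.2 P₁ φ₁ (hTφ q hq)
  obtain ⟨hbi, hbv⟩ := (hT q hq).2.2 P₁ φ₁ (hTφ' q hq)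
  obtain ⟨β, hβ⟩ := hintg _ hbi
  have hβ1 := hbv _ _ hle₂ _ hβ
  have hσ0 : σ q ≠ 0 := by
    intro h0
    have := hσ1 q hq
    rw [h0, map_zero] at this
    exact zero_ne_one this
  have hs0 : s q ≠ 0 := by
    intro h0
    rw [h0, map_zero] at hws
    exact zero_ne_one hws
  obtain ⟨k, hk⟩ := Nat.exists_eq_succ_of_ne_zero hn
  -- The image of `q.1` is found by extending to `q.1 * s q`, which is integral, and inverting `s q`.
  have hpow : (q.1 * s q) ^ n q = s q ^ k * (b q * d q) := by
    rw [← heq, hk, Nat.succ_eq_add_one]; ring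
  have hdi : IsIntegral P₁ (d q) :=
    isIntegral_algebraMap (x := (⟨d q, (mem_graph.1 (hle₁ hδ)).1⟩ : P₁))
  have hyi : IsIntegral P₁ (q.1 * s q) := by
    refine IsIntegral.of_pow (Nat.pos_of_ne_zero hn) ?_
    rw [hpow]
    exact (hsi.pow k).mul (hbi.mul hdi)
  obtain ⟨η, hη⟩ := hintg _ hyi
  have hηpow : η ^ n q = σ q ^ k * (β * δ) := by
    refine graph_unique (graph_pow hη (n q)) ?_
    rw [hpow]
    exact graph_mul (graph_pow (hσ q hq).1 k) (graph_mul hβ (hle₂ (hle₁ hδ)))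
  refine ⟨η * (σ q)⁻¹, ?_, fun hle => ?_⟩
  · have := graph_mul (hle₃ hη) (hinv _ _ (hσ q hq).1 hσ0)
    rwa [mul_assoc, mul_inv_cancel₀ hs0, mul_one] at this
  · have h1 : v δ ≤ q.2 ^ n q := by
      refine hδle ?_
      change w (d q) ≤ ι (q.2 ^ n q)
      rw [← hwd, map_pow]
      exact pow_le_pow_left₀ zero_le hle _
    rw [map_mul, map_inv₀, hσ1 q hq, inv_one, mul_one]
    refine le_of_pow_le_pow_left₀ hn zero_le ?_
    rw [← map_pow, hηpow, map_mul, map_mul, map_pow, hσ1 q hq, one_pow, one_mul]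
    calc v β * v δ ≤ 1 * v δ := by gcongr
      _ = v δ := one_mul _
      _ ≤ _ := h1

end
end TropVal

/-! ### Monomial inequalities and points of discs -/

namespace TropVal
open Polynomial

section
variable {Γ : Type*} [LinearOrderedCommGroupWithZero Γ]

/-- Whether `A * δ ^ m ≤ B * δ ^ n` holds depends only on the position of `δ` relative to a root
`h` of `A / B` or `B / A`. -/
lemma exists_threshold {X : Set Γ} (h0 : ∀ g ∈ X, g ≠ 0) (h1 : 1 ∈ X)
    (hdiv : ∀ g ∈ X, ∀ h ∈ X, g / h ∈ X) (hroot : ∀ g ∈ X, ∀ N : ℕ, N ≠ 0 → ∃ h ∈ X, h ^ N = g)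
    {δ : Γ} (hδ : δ ≠ 0) {A B : Γ} (hA : A ∈ X ∨ A = 0) (hB : B ∈ X) (m n : ℕ) :
    ∃ h ∈ X, ∀ ε, (δ ≤ h → ε ≤ h) → (h ≤ δ → h ≤ ε) →
      A * δ ^ m ≤ B * δ ^ n → A * ε ^ m ≤ B * ε ^ n := by
  rcases hA with hA | rfl
  swap
  · exact ⟨1, h1, fun ε _ _ _ => by simp⟩
  have hA0 : 0 < A := zero_lt_iff.2 (h0 A hA)
  have hB0 : 0 < B := zero_lt_iff.2 (h0 B hB)
  have hδ0 : 0 < δ := zero_lt_iff.2 hδ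
  rcases lt_trichotomy m n with hlt | rfl | hlt
  · obtain ⟨N, rfl⟩ := Nat.exists_eq_add_of_lt hlt
    obtain ⟨h, hh, hhN⟩ := hroot _ (hdiv _ hA _ hB) (N + 1) (by omega)
    refine ⟨h, hh, fun ε _ h2 h3 => ?_⟩
    rw [add_assoc, add_comm m, pow_add, ← mul_assoc] at h3 ⊢
    have h4 : A ≤ B * δ ^ (N + 1) := le_of_mul_le_mul_right h3 (pow_pos hδ0 m)
    have h5 : h ≤ δ := by
      refine le_of_pow_le_pow_left₀ (n := N + 1) (by omega) zero_le ?_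
      rw [hhN, div_le_iff₀ hB0, mul_comm]
      exact h4
    have h6 : A / B ≤ ε ^ (N + 1) := hhN ▸ pow_le_pow_left₀ zero_le (h2 h5) _
    rw [div_le_iff₀ hB0, mul_comm] at h6
    exact mul_le_mul_left h6 _
  · refine ⟨1, h1, fun ε _ _ h3 => ?_⟩
    exact mul_le_mul_left (le_of_mul_le_mul_right h3 (pow_pos hδ0 m)) _
  · obtain ⟨N, rfl⟩ := Nat.exists_eq_add_of_lt hlt
    obtain ⟨h, hh, hhN⟩ := hroot _ (hdiv _ hB _ hA) (N + 1) (by omega)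
    refine ⟨h, hh, fun ε h2 _ h3 => ?_⟩
    rw [add_assoc, add_comm n, pow_add, ← mul_assoc] at h3 ⊢
    have h4 : A * δ ^ (N + 1) ≤ B := le_of_mul_le_mul_right h3 (pow_pos hδ0 n)
    have h5 : δ ≤ h := by
      refine le_of_pow_le_pow_left₀ (n := N + 1) (by omega) zero_le ?_
      rw [hhN, le_div_iff₀ hA0, mul_comm]
      exact h4
    have h6 : ε ^ (N + 1) ≤ B / A := hhN ▸ pow_le_pow_left₀ zero_le (h2 h5) _
    rw [le_div_iff₀ hA0, mul_comm] at h6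
    exact mul_le_mul_left h6 _

/-- Elimination of quantifiers for divisible ordered groups, in the form needed here: finitely many
monomial inequalities satisfied by `δ` are satisfied by an element of the divisible group `X`. -/
lemma exists_pick {X : Set Γ} (h0 : ∀ g ∈ X, g ≠ 0) (h1 : 1 ∈ X)
    (hdiv : ∀ g ∈ X, ∀ h ∈ X, g / h ∈ X) (hroot : ∀ g ∈ X, ∀ N : ℕ, N ≠ 0 → ∃ h ∈ X, h ^ N = g)
    {δ : Γ} (hδ : δ ≠ 0) (S : Finset (Γ × Γ × ℕ × ℕ))
    (hS : ∀ σ ∈ S, (σ.1 ∈ X ∨ σ.1 = 0) ∧ σ.2.1 ∈ X) :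
    ∃ ε ∈ X, ∀ σ ∈ S, σ.1 * δ ^ σ.2.2.1 ≤ σ.2.1 * δ ^ σ.2.2.2 →
      σ.1 * ε ^ σ.2.2.1 ≤ σ.2.1 * ε ^ σ.2.2.2 := by
  classical
  have : ∀ σ : Γ × Γ × ℕ × ℕ, ∃ h ∈ X, σ ∈ S → ∀ ε, (δ ≤ h → ε ≤ h) → (h ≤ δ → h ≤ ε) →
      σ.1 * δ ^ σ.2.2.1 ≤ σ.2.1 * δ ^ σ.2.2.2 →
      σ.1 * ε ^ σ.2.2.1 ≤ σ.2.1 * ε ^ σ.2.2.2 := by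
    intro σ
    by_cases hσ : σ ∈ S
    · obtain ⟨h, hh, H⟩ := exists_threshold h0 h1 hdiv hroot hδ (hS σ hσ).1 (hS σ hσ).2
        σ.2.2.1 σ.2.2.2
      exact ⟨h, hh, fun _ => H⟩
    · exact ⟨1, h1, fun h => absurd h hσ⟩
  choose h hX H using this
  suffices hex : ∃ ε ∈ X, ∀ σ ∈ S, (δ ≤ h σ → ε ≤ h σ) ∧ (h σ ≤ δ → h σ ≤ ε) by
    obtain ⟨ε, hε, H'⟩ := hex
    exact ⟨ε, hε, fun σ hσ => H σ hσ ε (H' σ hσ).1 (H' σ hσ).2⟩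
  by_cases hne : (S.filter fun σ => h σ ≤ δ).Nonempty
  · obtain ⟨σ₀, hσ₀, hmax⟩ := Finset.exists_max_image _ h hne
    refine ⟨h σ₀, hX σ₀, fun σ hσ => ⟨fun hle => (Finset.mem_filter.1 hσ₀).2.trans hle,
      fun hle => hmax σ (Finset.mem_filter.2 ⟨hσ, hle⟩)⟩⟩
  · have hgt : ∀ σ ∈ S, ¬ h σ ≤ δ := fun σ hσ hle => hne ⟨σ, Finset.mem_filter.2 ⟨hσ, hle⟩⟩
    by_cases hne' : S.Nonempty
    · obtain ⟨σ₀, hσ₀, hmin⟩ := Finset.exists_min_image _ h hne'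
      exact ⟨h σ₀, hX σ₀, fun σ hσ => ⟨fun _ => hmin σ hσ, fun hle => absurd hle (hgt σ hσ)⟩⟩
    · exact ⟨1, h1, fun σ hσ => absurd ⟨σ, hσ⟩ hne'⟩

end

lemma prod_map_ite {I N : Type*} [CommMonoid N] (lo : I → Prop) [DecidablePred lo]
    (m : Multiset I) (g : I → N) (x : N) :
    (m.map fun a => if lo a then x else g a).prod =
      ((m.filter fun a => ¬ lo a).map g).prod * x ^ Multiset.card (m.filter lo) := by
  induction m using Multiset.induction_on with
  | empty => simp
  | cons a m ih =>
    by_cases h : lo a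
    · simp only [Multiset.map_cons, Multiset.prod_cons, h, if_true, ih, not_true,
        not_false_eq_true, Multiset.filter_cons_of_neg, Multiset.filter_cons_of_pos,
        Multiset.card_cons, pow_succ']
      exact mul_left_comm _ _ _
    · simp only [Multiset.map_cons, Multiset.prod_cons, h, if_false, ih,
        not_false_eq_true, Multiset.filter_cons_of_neg, Multiset.filter_cons_of_pos]
      exact (mul_assoc _ _ _).symm

section
variable {K L M Γ : Type*} [Field K] [Field L] [Field M] [Algebra K L] [Algebra K M]
  [LinearOrderedCommGroupWithZero Γ]

/-- A point of the disc of radius `v x` around `β` in general position with respect to finitely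
many other points `α a`. -/
lemma exists_point [IsAlgClosed L] (v : Valuation L NNReal) {I : Type*} (A : Finset I) (α : I → L)
    (β : L) {x : L} (hx : x ≠ 0) (lo : I → Prop) [DecidablePred lo]
    (hlo : ∀ a ∈ A, lo a → v (α a - β) ≤ v x) (hhi : ∀ a ∈ A, ¬ lo a → v x ≤ v (α a - β)) :
    ∃ t, ∀ a ∈ A, v (t - α a) = if lo a then v x else v (α a - β) := by
  classical
  have hvx : 0 < v x := zero_lt_iff.2 ((v.ne_zero_iff).2 hx)
  obtain ⟨u, hu, hua⟩ := exists_generic_unit v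
    ((A.image fun a => (α a - β) / x).filter fun c => v c ≤ 1)
    (fun c hc => (Finset.mem_filter.1 hc).2)
  have hxu : v (x * u) = v x := by rw [map_mul, hu, mul_one]
  refine ⟨β + x * u, fun a ha => ?_⟩
  rcases le_or_gt (v (α a - β)) (v x) with hle | hlt
  · have h1 : v (u - (α a - β) / x) = 1 := by
      refine hua _ (Finset.mem_filter.2 ⟨Finset.mem_image_of_mem _ ha, ?_⟩)
      rw [map_div₀]
      exact div_le_one_of_le₀ hle zero_le
    have h2 : β + x * u - α a = x * (u - (α a - β) / x) := by field_simp; ring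
    rw [h2, map_mul, h1, mul_one]
    split_ifs with h
    · rfl
    · exact le_antisymm (hhi a ha h) hle
  · have hn : ¬ lo a := fun h => (hlo a ha h).not_gt hlt
    rw [if_neg hn, show β + x * u - α a = x * u - (α a - β) by ring]
    exact Valuation.map_sub_eq_of_lt_right v (by rwa [hxu])

lemma exists_factorization [IsAlgClosed M] {E : IntermediateField K M}
    (hE : ∀ x : M, IsAlgebraic E x → x ∈ E) {t : M} (f : E[X]) :
    ∃ c ∈ E, ∃ m : Multiset M, (∀ a ∈ m, a ∈ E) ∧ aeval t f = c * (m.map fun a => t - a).prod := by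
  by_cases hf : f = 0
  · exact ⟨0, E.zero_mem, 0, by simp, by simp [hf]⟩
  obtain ⟨g, hg⟩ : ∃ g, g = f.map (algebraMap E M) := ⟨_, rfl⟩
  refine ⟨g.leadingCoeff, ?_, g.roots, ?_, ?_⟩
  · rw [hg, leadingCoeff, coeff_map]
    exact (f.coeff _).2
  · intro a ha
    refine hE a ⟨f, hf, ?_⟩
    rw [← eval_map_algebraMap, ← hg]
    exact (mem_roots'.1 ha).2
  · rw [← eval_map_algebraMap, ← hg]
    conv_lhs => rw [(IsAlgClosed.splits g).eq_prod_roots]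
    rw [eval_mul, eval_C, eval_multiset_prod, Multiset.map_map]
    simp

/-- If `E` is algebraically closed, the elements of `E(t)` are quotients of products of linear
factors `t - a`. -/
lemma exists_fraction [IsAlgClosed M] {E : IntermediateField K M}
    (hE : ∀ x : M, IsAlgebraic E x → x ∈ E) {t y : M} (hy : y ∈ IntermediateField.adjoin E {t}) :
    ∃ c ∈ E, ∃ m m' : Multiset M, (∀ a ∈ m, a ∈ E) ∧ (∀ a ∈ m', a ∈ E) ∧
      y = c * (m.map fun a => t - a).prod / (m'.map fun a => t - a).prod := by
  obtain ⟨f, g, rfl⟩ := (IntermediateField.mem_adjoin_simple_iff E y).1 hy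
  obtain ⟨c, hc, m, hm, hf⟩ := exists_factorization hE (t := t) f
  obtain ⟨c', hc', m', hm', hg⟩ := exists_factorization hE (t := t) g
  refine ⟨c / c', E.div_mem hc hc', m, m', hm, hm', ?_⟩
  rw [hf, hg]
  ring

end
end TropVal

/-! ### Approximation by homomorphisms: transcendental extensions -/

namespace TropVal
open Polynomial

section
variable {K L M Γ : Type*} [Field K] [Field L] [Field M] [Algebra K L] [Algebra K M]
  [LinearOrderedCommGroupWithZero Γ]

lemma multiset_prod_mem {E : IntermediateField K M} {I : Type*} {m : Multiset I} {g : I → M}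
    (h : ∀ a ∈ m, g a ∈ E) : (m.map g).prod ∈ E := by
  refine E.toSubfield.multiset_prod_mem _ fun x hx => ?_
  obtain ⟨a, ha, rfl⟩ := Multiset.mem_map.1 hx
  exact h a ha

lemma multiset_prod_ne_zero {N I : Type*} [CommMonoidWithZero N] [NoZeroDivisors N] [Nontrivial N]
    {m : Multiset I} {g : I → N} (h : ∀ a ∈ m, g a ≠ 0) : (m.map g).prod ≠ 0 := by
  refine Multiset.prod_ne_zero fun h0 => ?_
  obtain ⟨a, ha, h0⟩ := Multiset.mem_map.1 h0
  exact h a ha h0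

lemma map_prod_map {N N' I F : Type*} [CommMonoid N] [CommMonoid N'] [FunLike F N N']
    [MonoidHomClass F N N'] (w : F) (m : Multiset I) (g : I → N) :
    w (m.map g).prod = (m.map fun a => w (g a)).prod := by
  rw [map_multiset_prod, Multiset.map_map]; rfl

/-- Approximability passes from an algebraically closed `E` to the purely transcendental extension
`E(t)`. Every element of `E(t)` is a quotient of products of factors `t - a`. If `b` is the nearest
of the relevant points to `t`, the value of `t - a` is the maximum of the values of `t - b` and
`a - b`; the value of `t - b` may be replaced by one of the form `w e * ι s` with `e` in `E`, and
`t` is sent to a point in general position on the corresponding disc in `L`. -/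
lemma HasApprox.adjoin_simple [IsAlgClosed L] [IsAlgClosed M] {v : Valuation L NNReal}
    {w : Valuation M Γ} {ι : NNReal →*₀ Γ} (hsurj : ∀ s : NNReal, s ≠ 0 → ∃ y : L, v y = s)
    {E : IntermediateField K M} (hE : ∀ x : M, IsAlgebraic E x → x ∈ E) {t : M} (ht : t ∉ E)
    (h : HasApprox v w ι E) :
    HasApprox v w ι ((IntermediateField.adjoin E {t}).restrictScalars K) := by
  classical
  refine hasApprox_of fun Q hQ hQE => ?_
  lift Q to Finset (M × NNReal) using hQ
  have hdec : ∀ q : M × NNReal, ∃ (c : M) (m m' : Multiset M), q ∈ Q → c ∈ E ∧ (∀ a ∈ m, a ∈ E) ∧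
      (∀ a ∈ m', a ∈ E) ∧ q.1 = c * (m.map fun a => t - a).prod / (m'.map fun a => t - a).prod := by
    intro q
    by_cases hq : q ∈ Q
    · obtain ⟨c, hc, m, m', H⟩ := exists_fraction hE (hQE q hq).1
      exact ⟨c, m, m', fun _ => ⟨hc, H⟩⟩
    · exact ⟨0, 0, 0, fun h => absurd h hq⟩
  choose c m m' hdec using hdec
  obtain ⟨A, hA⟩ : ∃ A : Finset M, A = Q.biUnion fun q => (m q + m' q).toFinset := ⟨_, rfl⟩
  have hAE : ∀ a ∈ A, a ∈ E := by
    intro a ha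
    rw [hA, Finset.mem_biUnion] at ha
    obtain ⟨q, hq, ha⟩ := ha
    rw [Multiset.mem_toFinset, Multiset.mem_add] at ha
    obtain ⟨-, h1, h2, -⟩ := hdec q hq
    exact ha.elim (h1 a) (h2 a)
  have hmA : ∀ q ∈ Q, ∀ a ∈ m q, a ∈ A := by
    intro q hq a ha
    rw [hA, Finset.mem_biUnion]
    exact ⟨q, hq, by rw [Multiset.mem_toFinset, Multiset.mem_add]; exact Or.inl ha⟩
  have hmA' : ∀ q ∈ Q, ∀ a ∈ m' q, a ∈ A := by
    intro q hq a ha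
    rw [hA, Finset.mem_biUnion]
    exact ⟨q, hq, by rw [Multiset.mem_toFinset, Multiset.mem_add]; exact Or.inr ha⟩
  -- a nearest point `b`; inserting `0` only serves to make the set nonempty
  obtain ⟨b, hb, hmin⟩ := (insert 0 A).exists_min_image (fun a => w (t - a))
    ⟨0, Finset.mem_insert_self _ _⟩
  have hbE : b ∈ E := by
    rcases Finset.mem_insert.1 hb with rfl | hb
    exacts [E.zero_mem, hAE b hb]
  obtain ⟨δ, hδdef⟩ : ∃ δ, δ = w (t - b) := ⟨_, rfl⟩
  rw [← hδdef] at hmin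
  have hδ : δ ≠ 0 := by
    rw [hδdef, w.ne_zero_iff, sub_ne_zero]
    rintro rfl
    exact ht hbE
  obtain ⟨lo, hlo⟩ : ∃ lo : M → Prop, ∀ a, lo a ↔ w (a - b) ≤ δ :=
    ⟨fun a => w (a - b) ≤ δ, fun _ => Iff.rfl⟩
  have hhi0 : ∀ a, ¬ lo a → a - b ≠ 0 := by
    intro a ha h0
    refine ha ((hlo a).2 ?_)
    rw [h0, map_zero]
    exact zero_le
  have hwt : ∀ a ∈ A, w (t - a) = if lo a then δ else w (a - b) := by
    intro a ha
    have heq : t - a = (t - b) - (a - b) := by ring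
    split_ifs with hl
    · refine le_antisymm ?_ (hmin a (Finset.mem_insert_of_mem ha))
      rw [heq]
      exact (w.map_sub _ _).trans (max_le hδdef.ge ((hlo a).1 hl))
    · rw [heq]
      refine Valuation.map_sub_eq_of_lt_right w ?_
      rw [← hδdef]
      rw [hlo, not_le] at hl
      exact hl
  -- the divisible group in which the value of `t - b` is approximated
  obtain ⟨X, hX⟩ : ∃ X : Set Γ, ∀ g, g ∈ X ↔
      ∃ e ∈ E, e ≠ 0 ∧ ∃ s : NNReal, s ≠ 0 ∧ g = w e * ι s :=
    ⟨{g | ∃ e ∈ E, e ≠ 0 ∧ ∃ s : NNReal, s ≠ 0 ∧ g = w e * ι s}, fun _ => Iff.rfl⟩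
  have hXw : ∀ e ∈ E, e ≠ 0 → w e ∈ X := fun e he he0 =>
    (hX _).2 ⟨e, he, he0, 1, one_ne_zero, by rw [map_one, mul_one]⟩
  have hX1 : (1 : Γ) ∈ X := by
    have := hXw 1 E.one_mem one_ne_zero
    rwa [map_one] at this
  have hX0 : ∀ g ∈ X, g ≠ 0 := by
    intro g hg
    obtain ⟨e, -, he, s, hs, rfl⟩ := (hX g).1 hg
    exact mul_ne_zero ((w.ne_zero_iff).2 he) ((map_ne_zero ι).2 hs)
  have hXdiv : ∀ g ∈ X, ∀ g' ∈ X, g / g' ∈ X := by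
    intro g hg g' hg'
    obtain ⟨e, heE, he, s, hs, rfl⟩ := (hX g).1 hg
    obtain ⟨e', heE', he', s', hs', rfl⟩ := (hX g').1 hg'
    refine (hX _).2 ⟨e / e', E.div_mem heE heE', div_ne_zero he he', s / s', div_ne_zero hs hs', ?_⟩
    rw [map_div₀, map_div₀, mul_div_mul_comm]
  have hXroot : ∀ g ∈ X, ∀ N : ℕ, N ≠ 0 → ∃ h ∈ X, h ^ N = g := by
    intro g hg N hN
    obtain ⟨e, heE, he, s, hs, rfl⟩ := (hX g).1 hg
    obtain ⟨e', he'⟩ := IsAlgClosed.exists_pow_nat_eq e (Nat.pos_of_ne_zero hN)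
    have he0' : e' ≠ 0 := by
      rintro rfl
      rw [zero_pow hN] at he'
      exact he he'.symm
    have heE' : e' ∈ E := by
      refine hE e' (IsAlgebraic.of_pow (Nat.pos_of_ne_zero hN) ?_)
      rw [he']
      exact isAlgebraic_algebraMap (⟨e, heE⟩ : E)
    have hsN : (s ^ ((N : ℝ)⁻¹)) ^ N = s := NNReal.rpow_inv_natCast_pow s hN
    refine ⟨w e' * ι (s ^ ((N : ℝ)⁻¹)), (hX _).2 ⟨e', heE', he0', _, ?_, rfl⟩, ?_⟩
    · intro h0
      rw [h0, zero_pow hN] at hsN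
      exact hs hsN.symm
    · rw [mul_pow, ← map_pow, ← map_pow, he', hsN]
  -- the contribution of the distant points to a product of factors `t - a`
  obtain ⟨G, hG⟩ : ∃ G : Multiset M → M, ∀ m, G m =
      ((m.filter fun a => ¬ lo a).map fun a => a - b).prod := ⟨_, fun _ => rfl⟩
  have hGE : ∀ m : Multiset M, (∀ a ∈ m, a ∈ E) → G m ∈ E := by
    intro m hm
    rw [hG]
    exact multiset_prod_mem fun a ha => E.sub_mem (hm a (Multiset.mem_filter.1 ha).1) hbE
  have hG0 : ∀ m : Multiset M, G m ≠ 0 := by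
    intro m
    rw [hG]
    exact multiset_prod_ne_zero fun a ha => hhi0 a (Multiset.mem_filter.1 ha).2
  -- The last two families of inequalities keep near points near and distant points distant.
  obtain ⟨ε, hε, hpick⟩ := exists_pick hX0 hX1 hXdiv hXroot hδ
    (Q.image (fun q => (w (c q * G (m q)), ι q.2 * w (G (m' q)),
      Multiset.card ((m q).filter lo), Multiset.card ((m' q).filter lo))) ∪
    A.image (fun a => (w (a - b), 1, 0, 1)) ∪
    (A.filter fun a => ¬ lo a).image (fun a => (1, w (a - b), 1, 0)))
    (by
      intro σ hσ
      simp only [Finset.mem_union, Finset.mem_image, Finset.mem_filter] at hσ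
      rcases hσ with (⟨q, hq, rfl⟩ | ⟨a, ha, rfl⟩) | ⟨a, ⟨ha, hl⟩, rfl⟩
      · obtain ⟨hc, h1, h2, -⟩ := hdec q hq
        constructor
        · by_cases hc0 : c q = 0
          · right; simp [hc0]
          · exact Or.inl (hXw _ (E.mul_mem hc (hGE _ h1)) (mul_ne_zero hc0 (hG0 _)))
        · exact (hX _).2 ⟨_, hGE _ h2, hG0 _, q.2, (hQE q hq).2, mul_comm _ _⟩
      · refine ⟨?_, hX1⟩
        by_cases h0 : a - b = 0
        · right; simp [h0]
        · exact Or.inl (hXw _ (E.sub_mem (hAE a ha) hbE) h0)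
      · exact ⟨Or.inl hX1, hXw _ (E.sub_mem (hAE a ha) hbE) (hhi0 a hl)⟩)
  obtain ⟨e, heE, he0, s, hs0, rfl⟩ := (hX _).1 hε
  have hεlo : ∀ a ∈ A, lo a → w (a - b) ≤ w e * ι s := by
    intro a ha hl
    have := hpick (w (a - b), 1, 0, 1) (by
      simp only [Finset.mem_union, Finset.mem_image]
      exact Or.inl (Or.inr ⟨a, ha, rfl⟩))
    simpa using this (by simpa using (hlo a).1 hl)
  have hεhi : ∀ a ∈ A, ¬ lo a → w e * ι s ≤ w (a - b) := by
    intro a ha hl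
    have := hpick (1, w (a - b), 1, 0) (by
      simp only [Finset.mem_union, Finset.mem_image, Finset.mem_filter]
      exact Or.inr ⟨a, ⟨ha, hl⟩, rfl⟩)
    refine le_trans (by simp) ((this ?_).trans (by simp))
    rw [hlo, not_le] at hl
    simpa using hl.le
  -- surrogates in `E` for the factors `t - a`, and the real factor by which the values differ
  obtain ⟨star, hstar⟩ : ∃ star : M → M, ∀ a, star a = if lo a then e else a - b :=
    ⟨_, fun _ => rfl⟩
  obtain ⟨τ, hτ⟩ : ∃ τ : M → NNReal, ∀ a, τ a = if lo a then s else 1 := ⟨_, fun _ => rfl⟩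
  have hstarE : ∀ a ∈ E, star a ∈ E := by
    intro a ha
    rw [hstar]
    split_ifs
    exacts [heE, E.sub_mem ha hbE]
  have hstar0 : ∀ a, star a ≠ 0 := by
    intro a
    rw [hstar]
    split_ifs with hl
    exacts [he0, hhi0 a hl]
  have hτ0 : ∀ a, τ a ≠ 0 := by
    intro a
    rw [hτ]
    split_ifs
    exacts [hs0, one_ne_zero]
  have hprod : ∀ m : Multiset M, w (m.map star).prod * ι (m.map τ).prod =
      w (G m) * (w e * ι s) ^ Multiset.card (m.filter lo) := by
    intro m
    rw [hG, map_prod_map w, map_prod_map ι, map_prod_map w, ← prod_map_ite lo m,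
      ← Multiset.prod_map_mul]
    congr 1
    refine Multiset.map_congr rfl fun a _ => ?_
    rw [hstar, hτ]
    split_ifs
    · rfl
    · rw [map_one, mul_one]
  have hprodt : ∀ m : Multiset M, (∀ a ∈ m, a ∈ A) → w (m.map fun a => t - a).prod =
      w (G m) * δ ^ Multiset.card (m.filter lo) := by
    intro m hm
    rw [hG, map_prod_map w, map_prod_map w, ← prod_map_ite lo m]
    congr 1
    exact Multiset.map_congr rfl fun a ha => hwt a (hm a ha)
  obtain ⟨ys, hys⟩ : ∃ ys : M × NNReal → M, ∀ q, ys q =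
      c q * ((m q).map star).prod / ((m' q).map star).prod := ⟨_, fun _ => rfl⟩
  obtain ⟨rs, hrs⟩ : ∃ rs : M × NNReal → NNReal, ∀ q, rs q =
      q.2 * ((m' q).map τ).prod / ((m q).map τ).prod := ⟨_, fun _ => rfl⟩
  have hpτ0 : ∀ m : Multiset M, (m.map τ).prod ≠ 0 := fun m => multiset_prod_ne_zero fun a _ => hτ0 a
  have hps0 : ∀ m : Multiset M, (m.map star).prod ≠ 0 := fun m =>
    multiset_prod_ne_zero fun a _ => hstar0 a
  have hyle : ∀ q ∈ Q, w q.1 ≤ ι q.2 → w (ys q) ≤ ι (rs q) := by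
    intro q hq hle
    obtain ⟨-, -, -, hq1⟩ := hdec q hq
    rw [hq1, map_div₀, map_mul, hprodt _ (hmA q hq), hprodt _ (hmA' q hq), div_le_iff₀
      (zero_lt_iff.2 (mul_ne_zero ((w.ne_zero_iff).2 (hG0 _)) (pow_ne_zero _ hδ)))] at hle
    have := hpick _ (by
      simp only [Finset.mem_union, Finset.mem_image]
      exact Or.inl (Or.inl ⟨q, hq, rfl⟩))
    simp only [map_mul w, mul_assoc] at this
    have h2 := this hle
    have h3 := hprod (m q)
    have h4 := hprod (m' q)
    rw [← h3, ← h4] at h2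
    rw [hys, hrs, map_div₀, map_div₀, map_mul, map_mul,
      div_le_div_iff₀ (zero_lt_iff.2 ((w.ne_zero_iff).2 (hps0 _)))
        (zero_lt_iff.2 ((map_ne_zero ι).2 (hpτ0 _)))]
    calc _ ≤ _ := (mul_assoc _ _ _).trans_le h2
      _ = _ := by ac_rfl
  let Q' : Finset (M × NNReal) :=
    {(b, 1), (e, 1), (e⁻¹, 1)} ∪ A.image (fun a => (a, 1)) ∪ Q.image (fun q => (c q, 1)) ∪
    (A.filter fun a => ¬ lo a).image (fun a => ((a - b)⁻¹, 1)) ∪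
    (A.filter fun a => lo a).image (fun a => ((a - b) / e, s)) ∪
    (A.filter fun a => ¬ lo a).image (fun a => (e / (a - b), s⁻¹)) ∪
    Q.image (fun q => (ys q, rs q))
  have hQ' : ∀ x, x ∈ Q' ↔ (((((((x = (b, 1) ∨ x = (e, 1) ∨ x = (e⁻¹, 1)) ∨
      (∃ a ∈ A, (a, 1) = x)) ∨ (∃ q ∈ Q, (c q, 1) = x)) ∨
      (∃ a, (a ∈ A ∧ ¬ lo a) ∧ ((a - b)⁻¹, 1) = x)) ∨
      (∃ a, (a ∈ A ∧ lo a) ∧ ((a - b) / e, s) = x)) ∨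
      (∃ a, (a ∈ A ∧ ¬ lo a) ∧ (e / (a - b), s⁻¹) = x)) ∨
      ∃ q ∈ Q, (ys q, rs q) = x) := by
    intro x
    simp only [Q', Finset.mem_union, Finset.mem_image, Finset.mem_filter, Finset.mem_insert,
      Finset.mem_singleton]
  obtain ⟨P, φ, hPE, hφ⟩ := h Q' Q'.finite_toSet (by
    intro x hx
    rw [Finset.mem_coe, hQ'] at hx
    rcases hx with ((((((rfl | rfl | rfl) | ⟨a, ha, rfl⟩) | ⟨q, hq, rfl⟩) | ⟨a, ⟨ha, hl⟩, rfl⟩) |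
      ⟨a, ⟨ha, hl⟩, rfl⟩) | ⟨a, ⟨ha, hl⟩, rfl⟩) | ⟨q, hq, rfl⟩
    · exact ⟨hbE, one_ne_zero⟩
    · exact ⟨heE, one_ne_zero⟩
    · exact ⟨E.inv_mem heE, one_ne_zero⟩
    · exact ⟨hAE a ha, one_ne_zero⟩
    · exact ⟨(hdec q hq).1, one_ne_zero⟩
    · exact ⟨E.inv_mem (E.sub_mem (hAE a ha) hbE), one_ne_zero⟩
    · exact ⟨E.div_mem (E.sub_mem (hAE a ha) hbE) heE, hs0⟩
    · exact ⟨E.div_mem heE (E.sub_mem (hAE a ha) hbE), inv_ne_zero hs0⟩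
    · obtain ⟨hc, h1, h2, -⟩ := hdec q hq
      refine ⟨?_, ?_⟩
      · change ys q ∈ E
        rw [hys]
        exact E.div_mem (E.mul_mem hc (multiset_prod_mem fun a ha => hstarE a (h1 a ha)))
          (multiset_prod_mem fun a ha => hstarE a (h2 a ha))
      · change rs q ≠ 0
        rw [hrs]
        exact div_ne_zero (mul_ne_zero (hQE q hq).2 (hpτ0 _)) (hpτ0 _))
  have hφ' : ∀ x r, (x, r) ∈ Q' → ∃ y, (x, y) ∈ graph φ ∧ (w x ≤ ι r → v y ≤ r) :=
    fun x r hx => hφ (x, r) hx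
  -- if the inverse of `x` is also in the domain, the image of `x` does not vanish
  have hne : ∀ x y r, x ≠ 0 → (x, y) ∈ graph φ → (x⁻¹, r) ∈ Q' → y ≠ 0 := by
    intro x y r hx hy hr h0
    obtain ⟨y', hy', -⟩ := hφ' _ _ hr
    have h1 := graph_mul hy hy'
    rw [mul_inv_cancel₀ hx, h0, zero_mul] at h1
    exact zero_ne_one (graph_unique h1 graph_one)
  obtain ⟨β, hβ, -⟩ := hφ' b 1 ((hQ' _).2 (by simp only [true_or]))
  obtain ⟨e', he', -⟩ := hφ' e 1 ((hQ' _).2 (by simp only [true_or, or_true]))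
  have he0' : e' ≠ 0 := hne e e' 1 he0 he' ((hQ' _).2 (by simp only [true_or, or_true]))
  have hα : ∀ a, ∃ y, a ∈ A → (a, y) ∈ graph φ := by
    intro a
    by_cases ha : a ∈ A
    · obtain ⟨y, hy, -⟩ := hφ' a 1 ((hQ' _).2 (by
        refine Or.inl (Or.inl (Or.inl (Or.inl (Or.inl (Or.inr ⟨a, ha, rfl⟩)))))))
      exact ⟨y, fun _ => hy⟩
    · exact ⟨0, fun h => absurd h ha⟩
  choose α hα using hα
  have hαβ : ∀ a ∈ A, (a - b, α a - β) ∈ graph φ := fun a ha => graph_sub (hα a ha) hβ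
  have hαβ0 : ∀ a ∈ A, ¬ lo a → α a - β ≠ 0 := fun a ha hl =>
    hne _ _ 1 (hhi0 a hl) (hαβ a ha) ((hQ' _).2
      (Or.inl (Or.inl (Or.inl (Or.inr ⟨a, ⟨ha, hl⟩, rfl⟩)))))
  have hvlo : ∀ a ∈ A, lo a → v (α a - β) ≤ v e' * s := by
    intro a ha hl
    obtain ⟨κ, hκ, hκs⟩ := hφ' _ _ ((hQ' ((a - b) / e, s)).2
      (Or.inl (Or.inl (Or.inr ⟨a, ⟨ha, hl⟩, rfl⟩))))
    have h1 := graph_mul he' hκ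
    rw [mul_div_cancel₀ _ he0] at h1
    rw [graph_unique (hαβ a ha) h1, map_mul]
    gcongr
    refine hκs ?_
    rw [map_div₀, div_le_iff₀ (zero_lt_iff.2 ((w.ne_zero_iff).2 he0)), mul_comm]
    exact hεlo a ha hl
  have hvhi : ∀ a ∈ A, ¬ lo a → v e' * s ≤ v (α a - β) := by
    intro a ha hl
    obtain ⟨κ, hκ, hκs⟩ := hφ' _ _ ((hQ' (e / (a - b), s⁻¹)).2
      (Or.inl (Or.inr ⟨a, ⟨ha, hl⟩, rfl⟩)))
    have h1 := graph_mul (hαβ a ha) hκ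
    rw [mul_div_cancel₀ _ (hhi0 a hl)] at h1
    rw [graph_unique he' h1, map_mul]
    have h2 : v κ ≤ s⁻¹ := by
      refine hκs ?_
      rw [map_div₀, map_inv₀, div_le_iff₀ (zero_lt_iff.2 ((w.ne_zero_iff).2 (hhi0 a hl))),
        le_inv_mul_iff₀ (zero_lt_iff.2 ((map_ne_zero ι).2 hs0)), mul_comm]
      exact hεhi a ha hl
    calc v (α a - β) * v κ * s ≤ v (α a - β) * s⁻¹ * s := by gcongr
      _ = v (α a - β) := by rw [mul_assoc, inv_mul_cancel₀ hs0, mul_one]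
  -- the disc around `β` in which the image of `t` is chosen has radius `v (e' * z)`
  obtain ⟨z, hz⟩ := hsurj s hs0
  have hz0 : z ≠ 0 := by
    rintro rfl
    rw [map_zero] at hz
    exact hs0 hz.symm
  have hvx : v (e' * z) = v e' * s := by rw [map_mul, hz]
  obtain ⟨t', ht'⟩ := exists_point v A α β (mul_ne_zero he0' hz0) lo
    (by rw [hvx]; exact hvlo) (by rw [hvx]; exact hvhi)
  obtain ⟨star', hstar'⟩ : ∃ star' : M → L, ∀ a, star' a = if lo a then e' else α a - β :=
    ⟨_, fun _ => rfl⟩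
  have hss : ∀ a ∈ A, (star a, star' a) ∈ graph φ := by
    intro a ha
    rw [hstar, hstar']
    split_ifs
    exacts [he', hαβ a ha]
  have hstar0' : ∀ a ∈ A, star' a ≠ 0 := by
    intro a ha
    rw [hstar']
    split_ifs with hl
    exacts [he0', hαβ0 a ha hl]
  have hvt : ∀ a ∈ A, v (t' - α a) = v (star' a) * τ a := by
    intro a ha
    rw [ht' a ha, hstar', hτ, hvx]
    split_ifs
    exacts [rfl, (mul_one _).symm]
  -- `t` is transcendental over the domain of `φ`
  obtain ⟨P₁, φ₁, hle₁, htt'⟩ := exists_extend_eval φ t t' (fun p hp => by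
    suffices hp0 : p = 0 by rw [hp0, Polynomial.map_zero, eval_zero]
    by_contra hp0
    refine ht (hE t ⟨p.map (Subalgebra.inclusion hPE : P →+* E.toSubalgebra), ?_, ?_⟩)
    · exact (Polynomial.map_ne_zero_iff (Subalgebra.inclusion_injective hPE)).2 hp0
    · rw [← eval_map_algebraMap, Polynomial.map_map]
      exact hp)
  obtain ⟨P₂, φ₂, hle₂, hinv⟩ := exists_extend_inv φ₁
  refine ⟨P₂, φ₂, fun q hq => ?_⟩
  rw [Finset.mem_coe] at hq
  obtain ⟨-, -, -, hq1⟩ := hdec q hq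
  obtain ⟨γ, hγ, -⟩ := hφ' (c q) 1 ((hQ' _).2
    (Or.inl (Or.inl (Or.inl (Or.inl (Or.inr ⟨q, hq, rfl⟩))))))
  obtain ⟨ψ, hψ, hψr⟩ := hφ' _ _ ((hQ' (ys q, rs q)).2 (Or.inr ⟨q, hq, rfl⟩))
  have hgt : ∀ m : Multiset M, (∀ a ∈ m, a ∈ A) →
      ((m.map fun a => t - a).prod, (m.map fun a => t' - α a).prod) ∈ graph φ₁ := fun m hm =>
    graph_multiset_prod m fun a ha => graph_sub htt' (hle₁ (hα a (hm a ha)))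
  have hvp : ∀ m : Multiset M, (∀ a ∈ m, a ∈ A) → v (m.map fun a => t' - α a).prod =
      v (m.map star').prod * (m.map τ).prod := by
    intro m hm
    rw [map_prod_map v, map_prod_map v, ← Multiset.prod_map_mul]
    congr 1
    exact Multiset.map_congr rfl fun a ha => hvt a (hm a ha)
  have hs0' : v ((m' q).map star').prod ≠ 0 :=
    (v.ne_zero_iff).2 (multiset_prod_ne_zero fun a ha => hstar0' a (hmA' q hq a ha))
  have hden : ((m' q).map fun a => t' - α a).prod ≠ 0 := by
    rw [← v.ne_zero_iff, hvp _ (hmA' q hq)]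
    exact mul_ne_zero hs0' (hpτ0 _)
  refine ⟨γ * ((m q).map fun a => t' - α a).prod * (((m' q).map fun a => t' - α a).prod)⁻¹, ?_,
    fun hle => ?_⟩
  · rw [hq1, div_eq_mul_inv]
    exact graph_mul (graph_mul (hle₂ (hle₁ hγ)) (hle₂ (hgt _ (hmA q hq))))
      (hinv _ _ (hgt _ (hmA' q hq)) hden)
  · have h1 : v ψ ≤ rs q := hψr (hyle q hq hle)
    have h2 : ψ * ((m' q).map star').prod = γ * ((m q).map star').prod := by
      refine graph_unique (graph_mul hψ
        (graph_multiset_prod (m' q) fun a ha => hss a (hmA' q hq a ha))) ?_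
      rw [hys, div_mul_cancel₀ _ (hps0 _)]
      exact graph_mul hγ (graph_multiset_prod (m q) fun a ha => hss a (hmA q hq a ha))
    have h3 : v ψ * v ((m' q).map star').prod = v γ * v ((m q).map star').prod := by
      rw [← map_mul, h2, map_mul]
    rw [hrs, le_div_iff₀ (zero_lt_iff.2 (hpτ0 _))] at h1
    rw [map_mul, map_mul, map_inv₀, hvp _ (hmA q hq), hvp _ (hmA' q hq), ← mul_assoc, ← h3,
      ← div_eq_mul_inv, div_le_iff₀ (zero_lt_iff.2 (mul_ne_zero hs0' (hpτ0 _)))]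
    calc v ψ * v ((m' q).map star').prod * ((m q).map τ).prod
        = v ((m' q).map star').prod * (v ψ * ((m q).map τ).prod) := by ac_rfl
      _ ≤ v ((m' q).map star').prod * (q.2 * ((m' q).map τ).prod) := by gcongr
      _ = _ := by ac_rfl

end
end TropVal

/-! ### Approximation by homomorphisms: finitely generated extensions -/

namespace TropVal
open Polynomial

section
variable {K L M Γ : Type*} [Field K] [Field L] [Field M] [Algebra K L] [Algebra K M]
  [LinearOrderedCommGroupWithZero Γ]

lemma hasApprox_bot {v : Valuation L NNReal} {w : Valuation M Γ} {ι : NNReal →*₀ Γ}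
    (hw : ∀ (x : K) (c : NNReal), c ≠ 0 → w (algebraMap K M x) ≤ ι c → v (algebraMap K L x) ≤ c) :
    HasApprox v w ι (⊥ : IntermediateField K M) := by
  refine hasApprox_of fun Q _ hQE =>
    ⟨⊥, (Algebra.ofId K L).comp (Algebra.botEquiv K M : (⊥ : Subalgebra K M) →ₐ[K] K), ?_⟩
  intro q hq
  obtain ⟨hqE, hq0⟩ := hQE q hq
  obtain ⟨x, hx⟩ := IntermediateField.mem_bot.1 hqE
  refine ⟨algebraMap K L x, ?_, fun hle => hw x _ hq0 (hx ▸ hle)⟩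
  rw [← hx]
  exact Subalgebra.algebraMap_mem _ x

/-- Every finitely generated extension of `K` inside `M` is approximable, if `K` is. -/
lemma hasApprox_adjoin [IsAlgClosed L] [IsAlgClosed M] {v : Valuation L NNReal}
    {w : Valuation M Γ} {ι : NNReal →*₀ Γ} (hsurj : ∀ s : NNReal, s ≠ 0 → ∃ y : L, v y = s)
    (hw : ∀ (x : K) (c : NNReal), c ≠ 0 → w (algebraMap K M x) ≤ ι c → v (algebraMap K L x) ≤ c)
    (S : Finset M) : HasApprox v w ι (IntermediateField.adjoin K (S : Set M)) := by
  refine IntermediateField.induction_on_adjoin_finset S _ (hasApprox_bot hw) ?_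
  intro E t _ hE
  have hbar := hE.algebraicClosure
  have hclosed : ∀ x : M, IsAlgebraic ((algebraicClosure E M).restrictScalars K) x →
      x ∈ (algebraicClosure E M).restrictScalars K := by
    intro x hx
    have hx' : IsAlgebraic (algebraicClosure E M) x := hx
    exact mem_algebraicClosure_iff.2 (hx'.restrictScalars E)
  have hle : E ≤ (algebraicClosure E M).restrictScalars K := fun x hx =>
    mem_algebraicClosure_iff.2 (isAlgebraic_algebraMap (⟨x, hx⟩ : E))
  by_cases ht : t ∈ (algebraicClosure E M).restrictScalars K
  · refine hbar.mono fun x hx => ?_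
    have h1 : IntermediateField.adjoin E {t} ≤ algebraicClosure E M :=
      IntermediateField.adjoin_simple_le_iff.2 ht
    exact h1 hx
  · refine (hbar.adjoin_simple hsurj hclosed ht).mono fun x hx => ?_
    obtain ⟨a, b, rfl⟩ := (IntermediateField.mem_adjoin_simple_iff E x).1 hx
    have haeval : ∀ a : E[X], aeval t a ∈
        IntermediateField.adjoin ((algebraicClosure E M).restrictScalars K) {t} := by
      intro a
      rw [aeval_eq_sum_range]
      refine sum_mem fun i _ => ?_
      rw [Algebra.smul_def]
      exact mul_mem (IntermediateField.algebraMap_mem _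
        (⟨_, hle (a.coeff i).2⟩ : (algebraicClosure E M).restrictScalars K))
        (pow_mem (IntermediateField.mem_adjoin_simple_self _ t) i)
    exact div_mem (haeval a) (haeval b)

end
end TropVal

/-! ### Dominating valuation rings -/

namespace TropVal

/-- A proper ideal `J` of a ring `D` embedded by `f` in a field `M` is dominated by a valuation ring: some
valuation subring of `M` contains `D` and has `J` inside its maximal ideal. -/
lemma exists_valuationSubring {D M : Type*} [CommRing D] [Field M] (f : D →+* M)
    (hf : Function.Injective f) (J : Ideal D) (hJ : J ≠ ⊤) :
    ∃ V : ValuationSubring M, (∀ x, V.valuation (f x) ≤ 1) ∧ ∀ x ∈ J, V.valuation (f x) < 1 := by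
  obtain ⟨P, hP, hJP⟩ := Ideal.exists_le_maximal J hJ
  have hunit : ∀ y : P.primeCompl, IsUnit (f y) := by
    intro y
    refine (Ne.isUnit ?_)
    rw [Ne, map_eq_zero_iff f hf]
    intro h0
    exact y.2 (by simp [h0])
  let F : Localization.AtPrime P →+* M := IsLocalization.lift hunit
  have hF : ∀ x, F (algebraMap D _ x) = f x := IsLocalization.lift_eq hunit
  obtain ⟨V, h, hloc⟩ := IsLocalRing.exists_factor_valuationRing F
  have h1 : ∀ x, V.valuation (f x) ≤ 1 := fun x => by
    rw [V.valuation_le_one_iff, ← hF]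
    exact h _
  refine ⟨V, h1, fun x hx => lt_of_le_of_ne (h1 x) fun hx1 => ?_⟩
  have hu : IsUnit (⟨F (algebraMap D _ x), h _⟩ : V) := by
    rw [V.valuation_eq_one_iff]
    simpa [hF] using hx1
  have hu2 : IsUnit (algebraMap D (Localization.AtPrime P) x) := hloc.map_nonunit _ hu
  exact (IsLocalization.AtPrime.isUnit_to_map_iff (Localization.AtPrime P) P x).1 hu2 (hJP hx)

section
variable {A M Γ : Type*} [CommRing A] [Field M] [LinearOrderedCommGroupWithZero Γ]

/-- A valuation `u` on a domain `A`, possibly with a nonzero support, is refined by a valuation on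
any field containing `A`. -/
lemma exists_valuationSubring_refines (u : Valuation A Γ) (f : A →+* M)
    (hf : Function.Injective f) :
    ∃ V : ValuationSubring M,
      (∀ a b, u b ≠ 0 → u a ≤ u b → V.valuation (f a) ≤ V.valuation (f b)) ∧
      ∀ a b, u a < u b → V.valuation (f a) < V.valuation (f b) := by
  have hne : ∀ b, u b ≠ 0 → f b ≠ 0 := fun b hb h0 => hb (by
    rw [map_eq_zero_iff f hf] at h0; simp [h0])
  -- The fractions `a / b` of value at most one.
  let D : Subring M :=
    { carrier := {x | ∃ a b, u b ≠ 0 ∧ u a ≤ u b ∧ x = f a / f b}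
      mul_mem' := by
        rintro _ _ ⟨a, b, hb, hab, rfl⟩ ⟨c, d, hd, hcd, rfl⟩
        refine ⟨a * c, b * d, by simp [hb, hd], ?_, ?_⟩
        · rw [map_mul, map_mul]; exact mul_le_mul' hab hcd
        · rw [map_mul, map_mul, div_mul_div_comm]
      one_mem' := ⟨1, 1, by simp, le_rfl, by simp⟩
      add_mem' := by
        rintro _ _ ⟨a, b, hb, hab, rfl⟩ ⟨c, d, hd, hcd, rfl⟩
        refine ⟨a * d + b * c, b * d, by simp [hb, hd], ?_, ?_⟩
        · refine u.map_add_le ?_ ?_ <;> rw [map_mul, map_mul]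
          · gcongr
          · gcongr
        · rw [div_add_div _ _ (hne b hb) (hne d hd)]; simp
      zero_mem' := ⟨0, 1, by simp, by simp, by simp⟩
      neg_mem' := by
        rintro _ ⟨a, b, hb, hab, rfl⟩
        exact ⟨-a, b, hb, by simpa using hab, by simp [neg_div]⟩ }
  let J : Ideal D :=
    { carrier := {x | ∃ a b, u a < u b ∧ (x : M) = f a / f b}
      zero_mem' := ⟨0, 1, by simp, by simp⟩
      add_mem' := by
        rintro x y ⟨a, b, hab, hx⟩ ⟨c, d, hcd, hy⟩
        have hb := ne_zero_of_lt hab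
        have hd := ne_zero_of_lt hcd
        refine ⟨a * d + b * c, b * d, ?_, ?_⟩
        · refine u.map_add_lt ?_ ?_ <;> rw [map_mul, map_mul]
          · exact mul_lt_mul_of_pos_right hab (zero_lt_iff.2 hd)
          · exact mul_lt_mul_of_pos_left hcd (zero_lt_iff.2 hb)
        · rw [Subring.coe_add, hx, hy, div_add_div _ _ (hne b hb) (hne d hd)]; simp
      smul_mem' := by
        rintro ⟨_, a, b, hb, hab, rfl⟩ y ⟨c, d, hcd, hy⟩
        refine ⟨a * c, b * d, ?_, ?_⟩
        · rw [map_mul, map_mul]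
          exact (mul_le_mul_left hab _).trans_lt (mul_lt_mul_of_pos_left hcd (zero_lt_iff.2 hb))
        · rw [smul_eq_mul, Subring.coe_mul, hy, map_mul, map_mul, ← div_mul_div_comm] }
  have hJ : J ≠ ⊤ := by
    rw [Ne, Ideal.eq_top_iff_one]
    rintro ⟨a, b, hab, h⟩
    rw [Subring.coe_one, eq_comm, div_eq_one_iff_eq (hne b (ne_zero_of_lt hab))] at h
    exact hab.ne (congrArg u (hf h))
  obtain ⟨V, hV1, hV2⟩ := exists_valuationSubring D.subtype Subtype.val_injective J hJ
  refine ⟨V, fun a b hb hab => ?_, fun a b hab => ?_⟩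
  · have := hV1 ⟨f a / f b, a, b, hb, hab, rfl⟩
    rw [Subring.subtype_apply, map_div₀] at this
    exact (div_le_one₀ (zero_lt_iff.2 ((V.valuation.ne_zero_iff).2 (hne b hb)))).1 this
  · have hb := ne_zero_of_lt hab
    have := hV2 ⟨f a / f b, a, b, hb, hab.le, rfl⟩ ⟨a, b, hab, rfl⟩
    rw [Subring.subtype_apply, map_div₀] at this
    exact (div_lt_one₀ (zero_lt_iff.2 ((V.valuation.ne_zero_iff).2 (hne b hb)))).1 this

end
end TropVal

/-! ### From points to valuations -/

namespace TropVal

/-- The homomorphism of monoids with zero agreeing with `τ` away from `0`. -/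
noncomputable def extendZero {Γ : Type*} [LinearOrderedCommGroupWithZero Γ] (τ : NNReal → Γ)
    (h1 : τ 1 = 1) (hmul : ∀ s t, s ≠ 0 → t ≠ 0 → τ (s * t) = τ s * τ t) : NNReal →*₀ Γ where
  toFun s := if s = 0 then 0 else τ s
  map_zero' := by simp
  map_one' := by simp [h1]
  map_mul' s t := by
    by_cases hs : s = 0
    · simp [hs]
    by_cases ht : t = 0
    · simp [ht]
    simp [hs, ht, hmul]

lemma extendZero_apply {Γ : Type*} [LinearOrderedCommGroupWithZero Γ] (τ : NNReal → Γ)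
    (h1 : τ 1 = 1) (hmul : ∀ s t, s ≠ 0 → t ≠ 0 → τ (s * t) = τ s * τ t) {s : NNReal}
    (hs : s ≠ 0) : extendZero τ h1 hmul s = τ s := by
  simp [extendZero, hs]

/-- A point `φ` of `R` with values in `L` gives rise to a valuation on the fraction field of `R`
compatible with `v ∘ φ`. Variables `T_s` mapped to elements of `L` of value `s` provide the
embedding of `ℝ≥0` into the value group. -/
lemma exists_valuation_of_point {R : Type u} {L : Type*} [CommRing R] [IsDomain R] [Field L]
    (v : Valuation L NNReal) (hsurj : ∀ s : NNReal, s ≠ 0 → ∃ y : L, v y = s) (φ : R →+* L) :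
    ∃ (Γ : Type u) (_ : LinearOrderedCommGroupWithZero Γ) (ι : NNReal →*₀ Γ),
      Function.Injective ι ∧ Monotone ι ∧ ∃ w : Valuation (FractionRing R) Γ,
        ∀ (x : R) (s : NNReal), s ≠ 0 →
          (v (φ x) ≤ s → w (algebraMap R _ x) ≤ ι s) ∧
          (s ≤ v (φ x) → ι s ≤ w (algebraMap R _ x)) := by
  have hsurj' : ∀ s : NNReal, ∃ y : L, v y = s := fun s => by
    by_cases hs : s = 0
    · exact ⟨0, by simp [hs]⟩
    · exact hsurj s hs
  choose y hy using hsurj'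
  let R' := MvPolynomial NNReal R
  let φ' : R' →+* L := MvPolynomial.eval₂Hom φ y
  let F' := FractionRing R'
  let u : Valuation R' NNReal := v.comap φ'
  let T : NNReal → R' := MvPolynomial.X
  have huT : ∀ s, u (T s) = s := fun s =>
    (congrArg v (MvPolynomial.eval₂Hom_X' φ y s)).trans (hy s)
  have huC : ∀ x, u (MvPolynomial.C x) = v (φ x) := fun x =>
    congrArg v (MvPolynomial.eval₂Hom_C φ y x)
  obtain ⟨V, hV1, hV2⟩ := exists_valuationSubring_refines u (algebraMap R' F')
    (IsFractionRing.injective R' F')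
  have hVeq : ∀ a b, u b ≠ 0 → u a = u b →
      V.valuation (algebraMap R' F' a) = V.valuation (algebraMap R' F' b) := fun a b hb hab =>
    le_antisymm (hV1 a b hb hab.le) (hV1 b a (hab ▸ hb) hab.ge)
  let ι : NNReal →*₀ V.ValueGroup := extendZero (fun s => V.valuation (algebraMap R' F' (T s)))
    (by
      have := hVeq (T 1) 1 (by simp) (by simp [huT])
      simpa using this)
    (fun s t hs ht => by
      have := hVeq (T (s * t)) (T s * T t) (by simp [huT, hs, ht]) (by simp [huT])
      simpa using this)
  have hι : ∀ s, s ≠ 0 → ι s = V.valuation (algebraMap R' F' (T s)) := fun s hs =>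
    extendZero_apply _ _ _ hs
  have hstrict : StrictMono ι := by
    intro s t hst
    have ht := ne_zero_of_lt hst
    rw [hι t ht]
    by_cases hs : s = 0
    · rw [hs, map_zero]
      have := hV2 0 (T t) (by rw [huT, map_zero]; exact zero_lt_iff.2 ht)
      simpa using this
    · rw [hι s hs]
      exact hV2 _ _ (by simpa [huT] using hst)
  let j : FractionRing R →+* F' := IsFractionRing.map (K := FractionRing R) (L := F')
    (j := (MvPolynomial.C : R →+* R')) (MvPolynomial.C_injective NNReal R)
  have hj : ∀ x, j (algebraMap R _ x) = algebraMap R' F' (MvPolynomial.C x) := fun x =>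
    IsLocalization.map_eq _ x
  refine ⟨V.ValueGroup, inferInstance, ι, hstrict.injective, hstrict.monotone,
    V.valuation.comap j, fun x s hs => ⟨fun h => ?_, fun h => ?_⟩⟩
  · rw [Valuation.comap_apply, hj, hι s hs]
    exact hV1 _ _ (by simpa [huT] using hs) (by simpa [huT, huC] using h)
  · rw [Valuation.comap_apply, hj, hι s hs]
    exact hV1 _ _ (by rw [huC]; exact (lt_of_lt_of_le (zero_lt_iff.2 hs) h).ne')
      (by simpa [huT, huC] using h)

end TropVal

/-! ### Extension of a valuation to an algebraically closed field -/

namespace TropVal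

/-- Given a valuation `w` on a field `F` and `ι : ℝ≥0 → Γ`, some valuation on an algebraically
closed extension of `F`, whose value group contains elements `ι' c` realized in the field, compares
elements of `F` with the `ι' c` in the same way as `w` compares them with the `ι c`.
The field is the algebraic closure of the fraction field of the group algebra `F[ℝ>0]`, and the
valuation dominates the unit ball of the Gauss norm `∑ x_s T^s ↦ max w (x_s) ι(s)`. -/
lemma exists_isAlgClosed_extension {F : Type u} {Γ : Type*} [Field F]
    [LinearOrderedCommGroupWithZero Γ] (w : Valuation F Γ) (ι : NNReal →*₀ Γ) :
    ∃ (M : Type u) (_ : Field M) (_ : IsAlgClosed M) (j : F →+* M) (V : ValuationSubring M)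
      (ι' : NNReal →*₀ V.ValueGroup), ∀ (x : F) (c : NNReal), c ≠ 0 →
        (w x ≤ ι c → V.valuation (j x) ≤ ι' c) ∧ (ι c < w x → ι' c < V.valuation (j x)) := by
  classical
  let A := MonoidAlgebra F NNRealˣ
  let M := AlgebraicClosure (FractionRing A)
  let emb : A →+* M := (algebraMap (FractionRing A) M).comp (algebraMap A (FractionRing A))
  have hemb : Function.Injective emb :=
    (algebraMap (FractionRing A) M).injective.comp (IsFractionRing.injective A (FractionRing A))
  let ρ : NNRealˣ → Γ := fun s => (ι s)⁻¹
  have hρ0 : ∀ s, ρ s ≠ 0 := fun s => inv_ne_zero ((map_ne_zero ι).2 s.ne_zero)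
  have hρ1 : ρ 1 = 1 := by simp [ρ]
  have hρmul : ∀ s t, ρ (s * t) = ρ s * ρ t := fun s t => by simp [ρ, mul_comm]
  let D : Subring A :=
    { carrier := {p | ∀ s, w (p.coeff s) ≤ ρ s}
      mul_mem' := by
        intro p q hp hq s
        rw [MonoidAlgebra.coeff_mul, Finsupp.sum]
        refine w.map_sum_le fun a _ => w.map_sum_le fun b _ => ?_
        dsimp only
        split_ifs with h
        · rw [← h, map_mul, hρmul]
          exact mul_le_mul' (hp a) (hq b)
        · simp
      one_mem' := by
        intro s
        rw [MonoidAlgebra.one_def, MonoidAlgebra.coeff_single, Finsupp.single_apply]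
        split_ifs with h
        · simp [← h, hρ1]
        · simp
      add_mem' := by
        intro p q hp hq s
        rw [MonoidAlgebra.coeff_add]
        exact w.map_add_le (hp s) (hq s)
      zero_mem' := by intro s; simp
      neg_mem' := by 
        intro p hp s
        rw [show (-p).coeff s = -(p.coeff s) from rfl, w.map_neg]
        exact hp s }
  let J : Ideal D :=
    { carrier := {p | ∀ s, w ((p : A).coeff s) < ρ s}
      zero_mem' := by intro s; simpa using zero_lt_iff.2 (hρ0 s)
      add_mem' := by
        intro p q hp hq s
        rw [Subring.coe_add, MonoidAlgebra.coeff_add]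
        exact w.map_add_lt (hp s) (hq s)
      smul_mem' := by
        intro p q hq s
        rw [smul_eq_mul, Subring.coe_mul, MonoidAlgebra.coeff_mul, Finsupp.sum]
        refine w.map_sum_lt (hρ0 s) fun a _ => w.map_sum_lt (hρ0 s) fun b _ => ?_
        dsimp only
        split_ifs with h
        · rw [← h, map_mul, hρmul]
          exact (mul_le_mul_left (p.2 a) _).trans_lt
            (mul_lt_mul_of_pos_left (hq b) (zero_lt_iff.2 (hρ0 a)))
        · simpa using zero_lt_iff.2 (hρ0 s) }
  have hJ : J ≠ ⊤ := by
    rw [Ne, Ideal.eq_top_iff_one]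
    intro h
    have := h 1
    simp [hρ1] at this
  obtain ⟨V, hV1, hV2⟩ := exists_valuationSubring (emb.comp D.subtype)
    (hemb.comp Subtype.val_injective) J hJ
  have hmem : ∀ (s : NNRealˣ) (x : F), w x ≤ ρ s → MonoidAlgebra.single s x ∈ D := by
    intro s x hx t
    rw [MonoidAlgebra.coeff_single, Finsupp.single_apply]
    split_ifs with h
    · exact h ▸ hx
    · simp
  have hle : ∀ (s : NNRealˣ) (x : F), w x ≤ ρ s →
      V.valuation (emb (MonoidAlgebra.single s x)) ≤ 1 := fun s x hx =>
    hV1 ⟨_, hmem s x hx⟩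
  have hlt : ∀ (s : NNRealˣ) (x : F), w x < ρ s →
      V.valuation (emb (MonoidAlgebra.single s x)) < 1 := fun s x hx =>
    hV2 ⟨_, hmem s x hx.le⟩ (by
      intro t
      rw [MonoidAlgebra.coeff_single, Finsupp.single_apply]
      split_ifs with h
      · exact h ▸ hx
      · simpa using zero_lt_iff.2 (hρ0 t))
  let T : NNRealˣ →* V.ValueGroup :=
    ((V.valuation.comap emb : Valuation A V.ValueGroup) : A →* V.ValueGroup).comp
      (MonoidAlgebra.of F NNRealˣ)
  let j : F →+* M := emb.comp MonoidAlgebra.singleOneRingHom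
  have hsingle : ∀ (s : NNRealˣ) (x : F),
      V.valuation (emb (MonoidAlgebra.single s x)) = V.valuation (j x) * T s := by
    intro s x
    have h : (MonoidAlgebra.single s x : A) =
        MonoidAlgebra.single 1 x * MonoidAlgebra.of F NNRealˣ s := by
      simp
    rw [h, map_mul, map_mul]
    rfl
  have hT : ∀ s, T s * T s⁻¹ = 1 := fun s => by rw [← map_mul]; simp
  have hT0 : ∀ s, 0 < T s := fun s => zero_lt_iff.2 (left_ne_zero_of_mul_eq_one (hT s))
  let τ : NNReal → V.ValueGroup := fun s => if hs : s = 0 then 0 else T (Units.mk0 s hs)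
  let ι' : NNReal →*₀ V.ValueGroup := extendZero τ
    (by simp [τ]) (fun s t hs ht => by simp [τ, hs, ht, Units.mk0_mul, map_mul])
  have hι' : ∀ s : NNRealˣ, ι' s = T s := fun s => by
    rw [extendZero_apply _ _ _ s.ne_zero]; simp [τ]
  refine ⟨M, inferInstance, inferInstance, j, V, ι', fun x c hc => ?_⟩
  obtain ⟨s, rfl⟩ : ∃ s : NNRealˣ, (s : NNReal) = c := ⟨Units.mk0 c hc, rfl⟩
  have hρι : ρ s⁻¹ = ι s := by simp [ρ]
  rw [hι']
  refine ⟨fun h => ?_, fun h => ?_⟩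
  · have h1 := hle s⁻¹ x (hρι ▸ h)
    rw [hsingle] at h1
    calc V.valuation (j x) = V.valuation (j x) * T s⁻¹ * T s := by
          rw [mul_assoc, mul_comm (T s⁻¹), hT, mul_one]
      _ ≤ 1 * T s := by gcongr
      _ = T s := one_mul _
  · -- `T^s x⁻¹` has Gauss norm less than one.
    have hx : w x ≠ 0 := ne_zero_of_lt h
    have hjx : V.valuation (j x) ≠ 0 := by simpa using hx
    have h1 := hlt s x⁻¹ (by
      rw [map_inv₀]
      exact inv_strictAnti₀ (zero_lt_iff.2 (by simp)) h)
    rw [hsingle, map_inv₀, map_inv₀, mul_comm, ← div_eq_mul_inv,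
      div_lt_one₀ (zero_lt_iff.2 hjx)] at h1
    exact h1

end TropVal

/-! ### From valuations to points -/

namespace TropVal

/-- Realization of a valuation on the function field by a point: only finitely many comparisons
`w (g q) ≤ ι (c q)` have to be preserved, and the point `χ` of `R` with values in `L` preserves
all of them. -/
lemma exists_point_of_valuation {K : Type u} {L : Type*} [Field K] [Field L] [IsAlgClosed L]
    [Algebra K L] (vK : Valuation K NNReal) (v : Valuation L NNReal)
    (hext : ∀ x : K, v (algebraMap K L x) = vK x)
    (hsurj : ∀ s : NNReal, s ≠ 0 → ∃ y : L, v y = s)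
    {m : ℕ} (I : Ideal (MvPolynomial (Fin m) K)) [I.IsPrime]
    {Γ : Type*} [LinearOrderedCommGroupWithZero Γ] (ι : NNReal →*₀ Γ) (hι : StrictMono ι)
    (w : Valuation (FractionRing (MvPolynomial (Fin m) K ⧸ I)) Γ)
    (hwK : ∀ x : K, w (algebraMap K _ x) = ι (vK x))
    {κ : Type*} [Finite κ] (g : κ → (MvPolynomial (Fin m) K ⧸ I)) (c : κ → NNReal)
    (hc : ∀ k, c k ≠ 0) :
    ∃ χ : (MvPolynomial (Fin m) K ⧸ I) →ₐ[K] L,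
      ∀ k, w (algebraMap _ _ (g k)) ≤ ι (c k) → v (χ (g k)) ≤ c k := by
  classical
  obtain ⟨M, _, _, j, V, ι', hV⟩ := exists_isAlgClosed_extension w ι
  let _ : Algebra K M := (j.comp (algebraMap K _)).toAlgebra
  let ψ : (MvPolynomial (Fin m) K ⧸ I) →ₐ[K] M :=
    { j.comp (algebraMap (MvPolynomial (Fin m) K ⧸ I)
        (FractionRing (MvPolynomial (Fin m) K ⧸ I))) with
      commutes' := fun x => congrArg j (IsScalarTower.algebraMap_apply K _ _ x).symm }
  have hψ : ∀ x, ψ x = j (algebraMap _ _ x) := fun _ => rfl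
  have hw : ∀ (x : K) (c : NNReal), c ≠ 0 → V.valuation (algebraMap K M x) ≤ ι' c →
      v (algebraMap K L x) ≤ c := by
    intro x c hc hx
    rw [hext]
    by_contra! hlt
    refine absurd hx (not_le.2 ((hV _ c hc).2 ?_))
    rw [hwK]
    exact hι hlt
  -- The coordinate functions are added to the family to force the whole of `R` into the domain
  -- of the approximating homomorphism.
  let Y : Fin m → (MvPolynomial (Fin m) K ⧸ I) := fun i => Ideal.Quotient.mk I (MvPolynomial.X i)
  let Q : Set (M × NNReal) := Set.range (fun i => (ψ (Y i), 1)) ∪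
    Set.range (fun k => (ψ (g k), c k))
  have hQ : Q.Finite := (Set.finite_range _).union (Set.finite_range _)
  have happ := hasApprox_adjoin hsurj hw ((hQ.image Prod.fst).toFinset)
  obtain ⟨P, φ, -, hφ⟩ := happ Q hQ (by
    intro q hq
    refine ⟨IntermediateField.subset_adjoin _ _ ?_, ?_⟩
    · simpa using ⟨q.2, hq⟩
    · rcases hq with ⟨i, rfl⟩ | ⟨k, rfl⟩
      · exact one_ne_zero
      · exact hc k)
  have hP : ∀ x, ψ x ∈ P := by
    intro x
    obtain ⟨p, rfl⟩ := Ideal.Quotient.mk_surjective x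
    induction p using MvPolynomial.induction_on with
    | C a =>
      have : Ideal.Quotient.mk I (MvPolynomial.C a) = algebraMap K _ a := rfl
      rw [this, AlgHom.commutes]
      exact P.algebraMap_mem a
    | add a b ha hb => rw [map_add, map_add]; exact add_mem ha hb
    | mul_X a i ha =>
      rw [map_mul, map_mul]
      obtain ⟨y, hy, -⟩ := hφ (ψ (Y i), 1) (Or.inl ⟨i, rfl⟩)
      exact mul_mem ha (mem_graph.1 hy).1
  refine ⟨φ.comp (ψ.codRestrict P hP), fun k hk => ?_⟩
  obtain ⟨y, hy, hle⟩ := hφ (ψ (g k), c k) (Or.inr ⟨k, rfl⟩)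
  obtain ⟨_, rfl⟩ := mem_graph.1 hy
  exact hle ((hV _ _ (hc k)).1 hk)

end TropVal

/-- Real-valued instance of part B of the tropicalization theorem: a point `r ∈ (ℝ>0)ⁿ` lies in
the tropicalization of the semialgebraic set `X ⊆ Hom_{K-alg}(R, L)` if and only if it is
realized by a valuation on the function field `Frac R` extending `vK` (with values in some
linearly ordered group with zero receiving `ℝ≥0`) satisfying the defining inequalities. -/
theorem mem_tropicalization_iff_exists_valuation
    {K : Type u} {L : Type*} [Field K] [Field L] [IsAlgClosed L] [Algebra K L]
    (vK : Valuation K NNReal) (v : Valuation L NNReal)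
    (hext : ∀ x : K, v (algebraMap K L x) = vK x)
    (hsurj : ∀ s : NNReal, s ≠ 0 → ∃ y : L, v y = s)
    (m n p q : ℕ) (I : Ideal (MvPolynomial (Fin m) K)) [I.IsPrime]
    (f : Fin n → (MvPolynomial (Fin m) K ⧸ I)ˣ)
    (g : Fin p → Fin q → (MvPolynomial (Fin m) K ⧸ I))
    (γ : Fin p → Fin q → NNReal) (hγ : ∀ ℓ j, 0 < γ ℓ j)
    (r : Fin n → NNReal) (hr : ∀ i, r i ≠ 0) :
    (∃ φ : (MvPolynomial (Fin m) K ⧸ I) →ₐ[K] L,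
        (∃ ℓ : Fin p, ∀ j : Fin q, v (φ (g ℓ j)) ≤ γ ℓ j) ∧
        ∀ i, v (φ ((f i : (MvPolynomial (Fin m) K ⧸ I)ˣ))) = r i) ↔
    (∃ (Δ₀ : Type u) (_ : LinearOrderedCommGroupWithZero Δ₀) (ι : NNReal →*₀ Δ₀),
      Function.Injective ι ∧ Monotone ι ∧
      ∃ w : Valuation (FractionRing (MvPolynomial (Fin m) K ⧸ I)) Δ₀,
        (∀ x : K, w (algebraMap K (FractionRing (MvPolynomial (Fin m) K ⧸ I)) x) = ι (vK x)) ∧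
        (∃ ℓ : Fin p, ∀ j : Fin q,
          w (algebraMap (MvPolynomial (Fin m) K ⧸ I)
              (FractionRing (MvPolynomial (Fin m) K ⧸ I)) (g ℓ j)) ≤ ι (γ ℓ j)) ∧
        ∀ i, w (algebraMap (MvPolynomial (Fin m) K ⧸ I)
              (FractionRing (MvPolynomial (Fin m) K ⧸ I)) ((f i : (MvPolynomial (Fin m) K ⧸ I)ˣ)))
            = ι (r i)) := by
  let R := MvPolynomial (Fin m) K ⧸ I
  constructor
  · rintro ⟨φ, ⟨ℓ, hℓ⟩, hf⟩
    obtain ⟨Γ, hΓ, ι, hinj, hmono, w, hw⟩ :=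
      TropVal.exists_valuation_of_point v hsurj (φ : R →+* L)
    have heq : ∀ (x : R) (s : NNReal), s ≠ 0 → v (φ x) = s →
        w (algebraMap R (FractionRing R) x) = ι s := fun x s hs hx =>
      le_antisymm ((hw x s hs).1 hx.le) ((hw x s hs).2 hx.ge)
    refine ⟨Γ, hΓ, ι, hinj, hmono, w, fun x => ?_, ⟨ℓ, fun j => ?_⟩, fun i => ?_⟩
    · by_cases hx : x = 0
      · simp [hx]
      · rw [IsScalarTower.algebraMap_apply K R (FractionRing R)]
        exact heq _ _ ((vK.ne_zero_iff).2 hx) (by rw [AlgHom.commutes, hext])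
    · exact (hw _ _ (hγ ℓ j).ne').1 (hℓ j)
    · exact heq _ _ (hr i) (hf i)
  · rintro ⟨Γ, hΓ, ι, hinj, hmono, w, hwK, ⟨ℓ, hℓ⟩, hf⟩
    -- An equality `w (f i) = ι (r i)` is encoded by upper bounds for `f i` and `(f i)⁻¹`.
    let G : Fin q ⊕ Fin n ⊕ Fin n → R :=
      Sum.elim (g ℓ) (Sum.elim (fun i => f i) (fun i => ((f i)⁻¹ : Rˣ)))
    let c : Fin q ⊕ Fin n ⊕ Fin n → NNReal := Sum.elim (γ ℓ) (Sum.elim r (fun i => (r i)⁻¹))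
    obtain ⟨χ, hχ⟩ := TropVal.exists_point_of_valuation vK v hext hsurj I ι
      (hmono.strictMono_of_injective hinj) w hwK G c (by
        rintro (j | i | i)
        · exact (hγ ℓ j).ne'
        · exact hr i
        · exact inv_ne_zero (hr i))
    refine ⟨χ, ⟨ℓ, fun j => hχ (.inl j) (hℓ j)⟩, fun i => ?_⟩
    have h1 : v (χ (f i)) ≤ r i := hχ (.inr (.inl i)) (hf i).le
    have h2 : v (χ ((f i)⁻¹ : Rˣ)) ≤ (r i)⁻¹ := by
      refine hχ (.inr (.inr i)) (le_of_eq ?_)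
      change w (algebraMap R (FractionRing R) ((f i)⁻¹ : Rˣ)) = ι (r i)⁻¹
      rw [map_inv₀, ← hf i]
      refine eq_inv_of_mul_eq_one_left ?_
      rw [← map_mul, ← map_mul, Units.inv_mul, map_one, map_one]
    have h3 : v (χ (f i)) * v (χ ((f i)⁻¹ : Rˣ)) = 1 := by
      rw [← map_mul, ← map_mul, Units.mul_inv, map_one, map_one]
    refine le_antisymm h1 ?_
    rw [eq_inv_of_mul_eq_one_right h3] at h2
    exact (inv_le_inv₀ (zero_lt_iff.2 (left_ne_zero_of_mul_eq_one h3)) (zero_lt_iff.2 (hr i))).1 h2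
end

section
/- Let (K, v_K) be a field with a multiplicative valuation v_K : K → ℝ≥0, and let L be an algebraically closed field extension of K equipped with a valuation v : L → ℝ≥0 extending v_K and such that v(L^×) = ℝ>0. Let R = K[Y₁,…,Y_m]/I with I a prime ideal, and let f₁,…,fₙ be units of R that are algebraically independent over K. Then for every (r₁,…,rₙ) ∈ (ℝ>0)ⁿ there exists a K-algebra homomorphism φ : R → L with v(φ(fᵢ)) = rᵢ for every i. In other words, the tropicalization map φ ↦ (v(φ(f₁)),…,v(φ(fₙ))) from Hom_{K-alg}(R, L) to (ℝ>0)ⁿ is surjective. -/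
/-!
The `fᵢ` extend to a transcendence basis `t` of `R` over `K`, so `R` is a finite type algebra,
algebraic over the polynomial ring `B = K[t]`. After inverting one nonzero `y ∈ B` the generators
of `R` become integral over `B`, so lying over and the algebraic closedness of `L` show that every
homomorphism `B → L` not killing `y` extends to `R` (`exists_ne_zero_forall_exists_extension`).

A homomorphism `B → L` is a choice of values in `L` for the elements of `t`. Each sphere
`{a | v a = r}` with `r ≠ 0` is infinite (`infinite_sphere`), and a nonzero polynomial cannot
vanish on a product of infinite sets. Hence the values at the `fᵢ` can be chosen of absolute
values `rᵢ` and such that `y` is not killed.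
-/

/-- Homomorphisms into an algebraically closed field extend along injective integral ring
extensions. -/
theorem exists_extension_of_isIntegral {A T L : Type*} [CommRing A] [CommRing T] [Algebra A T]
    [Algebra.IsIntegral A T] [Field L] [IsAlgClosed L]
    (hinj : Function.Injective (algebraMap A T)) (ψ : A →+* L) :
    ∃ ψ' : T →+* L, ∀ a, ψ' (algebraMap A T a) = ψ a := by
  let P : Ideal A := RingHom.ker ψ
  have hP : P.IsPrime := RingHom.ker_isPrime ψ
  obtain ⟨Q, -, hQ, hQP⟩ := Ideal.exists_ideal_over_prime_of_isIntegral (S := T) P ⊥ (by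
    rw [← RingHom.ker_eq_comap_bot, (RingHom.injective_iff_ker_eq_bot _).1 hinj]
    exact bot_le)
  have hlies : Q.LiesOver P := ⟨hQP.symm⟩
  let : Algebra (A ⧸ P) L := (RingHom.kerLift ψ).toAlgebra
  have hfaith : FaithfulSMul (A ⧸ P) L :=
    (faithfulSMul_iff_algebraMap_injective _ _).2 (RingHom.kerLift_injective ψ)
  have hint : Algebra.IsIntegral (A ⧸ P) (T ⧸ Q) := inferInstance
  have hdomA : IsDomain (A ⧸ P) := Ideal.Quotient.isDomain P
  have hdomT : IsDomain (T ⧸ Q) := Ideal.Quotient.isDomain Q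
  have htorT : Module.IsTorsionFree (A ⧸ P) (T ⧸ Q) := by
    have : FaithfulSMul (A ⧸ P) (T ⧸ Q) := inferInstance
    exact FaithfulSMul.to_isTorsionFree _ _
  have htorL : Module.IsTorsionFree (A ⧸ P) L := FaithfulSMul.to_isTorsionFree _ _
  let χ : (T ⧸ Q) →ₐ[A ⧸ P] L := IsAlgClosed.lift
  refine ⟨χ.toRingHom.comp (Ideal.Quotient.mk Q), fun a => ?_⟩
  exact χ.commutes (Ideal.Quotient.mk P a)

/-- For a finite type algebraic extension of domains `B ⊆ R`, a homomorphism from `B` to an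
algebraically closed field extends to `R` as soon as it does not kill a certain nonzero `y`: the
generators of `R` are integral over `B[1/y]`. -/
theorem exists_ne_zero_forall_exists_extension {B R L : Type*} [CommRing B] [CommRing R]
    [IsDomain B] [IsDomain R] [Algebra B R] [Algebra.FiniteType B R] [Algebra.IsAlgebraic B R]
    [Field L] [IsAlgClosed L] (hinj : Function.Injective (algebraMap B R)) :
    ∃ y : B, y ≠ 0 ∧ ∀ ψ : B →+* L, ψ y ≠ 0 →
      ∃ ψ' : R →+* L, ∀ b, ψ' (algebraMap B R b) = ψ b := by
  obtain ⟨s, hs⟩ := Algebra.FiniteType.out (R := B) (A := R)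
  obtain ⟨y, hy, hint⟩ := Algebra.IsAlgebraic.exists_integral_multiples B s
  refine ⟨y, hy, fun ψ hψ => ?_⟩
  let F := FractionRing R
  let C := Localization.Away y
  have hBF : Function.Injective (algebraMap B F) := by
    rw [IsScalarTower.algebraMap_eq B R F]
    exact (IsFractionRing.injective R F).comp hinj
  have hyF : IsUnit (algebraMap B F y) :=
    IsUnit.mk0 _ ((map_ne_zero_iff _ hBF).2 hy)
  let g : C →+* F := IsLocalization.Away.lift (S := C) y hyF
  have hg : ∀ b, g (algebraMap B C b) = algebraMap B F b :=
    fun b => IsLocalization.Away.lift_eq y hyF b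
  have hBC : Function.Injective (algebraMap B C) :=
    IsLocalization.injective C (powers_le_nonZeroDivisors_of_noZeroDivisors hy)
  have hginj : Function.Injective g := by
    rw [IsLocalization.injective_iff_map_algebraMap_eq (Submonoid.powers y)]
    intro a b
    rw [hg, hg, hBC.eq_iff, hBF.eq_iff]
  let : Algebra C F := g.toAlgebra
  have : IsScalarTower B C F := IsScalarTower.of_algebraMap_eq fun b => (hg b).symm
  let T := integralClosure C F
  -- The image of `R` in its fraction field is integral over `B[1/y]`.
  have hRT : ∀ x : R, algebraMap R F x ∈ T := by
    intro x
    have hx : x ∈ Algebra.adjoin B (s : Set R) := hs ▸ Algebra.mem_top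
    induction hx using Algebra.adjoin_induction with
    | mem z hz =>
      have h1 : IsIntegral C (algebraMap R F (y • z)) :=
        ((hint z hz).map (IsScalarTower.toAlgHom B R F)).tower_top
      have h2 : IsIntegral C (algebraMap C F (IsLocalization.Away.invSelf y)) :=
        isIntegral_algebraMap
      have h3 := h2.mul h1
      have h4 : algebraMap C F (IsLocalization.Away.invSelf y) * algebraMap B F y = 1 := by
        rw [IsScalarTower.algebraMap_apply B C F, ← map_mul, mul_comm,
          IsLocalization.Away.mul_invSelf, map_one]
      rw [Algebra.smul_def, map_mul, ← IsScalarTower.algebraMap_apply B R F, ← mul_assoc, h4,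
        one_mul] at h3
      exact h3
    | algebraMap b =>
      rw [← IsScalarTower.algebraMap_apply B R F, IsScalarTower.algebraMap_apply B C F]
      exact T.algebraMap_mem _
    | add a b _ _ ha hb => rw [map_add]; exact T.add_mem ha hb
    | mul a b _ _ ha hb => rw [map_mul]; exact T.mul_mem ha hb
  have hCT : Function.Injective (algebraMap C T) := fun a b h =>
    hginj (congrArg (Subtype.val : T → F) h)
  obtain ⟨χ, hχ⟩ := exists_extension_of_isIntegral hCT
    (IsLocalization.Away.lift (S := C) y (IsUnit.mk0 _ hψ))
  let ι : R →+* T := (algebraMap R F).codRestrict T.toSubring hRT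
  refine ⟨χ.comp ι, fun b => ?_⟩
  have hb : ι (algebraMap B R b) = algebraMap C T (algebraMap B C b) :=
    Subtype.ext ((IsScalarTower.algebraMap_apply B R F b).symm.trans (hg b).symm)
  rw [RingHom.comp_apply, hb, hχ]
  exact IsLocalization.Away.lift_eq y _ b

/-- If `v y = r ≠ 0`, then perturbing `y` by elements of smaller valuation, of which there are
infinitely many, stays in the sphere of radius `r`. -/
theorem infinite_sphere {L : Type*} [Field L] (v : Valuation L NNReal)
    (hsurj : ∀ r : NNReal, r ≠ 0 → ∃ y : L, v y = r) {r : NNReal} (hr : r ≠ 0) :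
    {y : L | v y = r}.Infinite := by
  obtain ⟨y, hy⟩ := hsurj r hr
  have hsmall : {z : L | v z < r}.Infinite := by
    refine Set.Infinite.of_image v ((Set.Ioo_infinite (pos_iff_ne_zero.2 hr)).mono ?_)
    rintro q ⟨hq0, hqr⟩
    obtain ⟨z, rfl⟩ := hsurj q hq0.ne'
    exact ⟨z, hqr, rfl⟩
  refine (hsmall.image (f := fun z => y + z) (add_right_injective y).injOn).mono ?_
  rintro _ ⟨z, hz, rfl⟩
  have hz' : v z < v y := by rw [hy]; exact hz
  exact (v.map_add_eq_of_lt_left hz').trans hy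


/-- Let `(K, vK)` be a real-valued field and `L` an algebraically closed extension with a
valuation `v` extending `vK` whose value group is all of `ℝ>0`.  Let `R = K[Y₁,…,Y_m]/I` with `I`
prime, and let `f₁,…,fₙ` be units of `R` that are algebraically independent over `K`.  Then the
tropicalization map `φ ↦ (v (φ f₁), …, v (φ fₙ))` on `Hom_{K-alg}(R, L)` hits every point of
`(ℝ>0)ⁿ`. -/
theorem tropicalization_surjective_of_algebraicIndependent
    {K L : Type*} [Field K] [Field L] [IsAlgClosed L] [Algebra K L]
    (vK : Valuation K NNReal) (v : Valuation L NNReal)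
    (hext : ∀ x : K, v (algebraMap K L x) = vK x)
    (hsurj : ∀ r : NNReal, r ≠ 0 → ∃ y : L, v y = r)
    (m n : ℕ) (I : Ideal (MvPolynomial (Fin m) K)) [I.IsPrime]
    (f : Fin n → (MvPolynomial (Fin m) K ⧸ I)ˣ)
    (hf : AlgebraicIndependent K fun i => ((f i : MvPolynomial (Fin m) K ⧸ I))) :
    ∀ r : Fin n → NNReal, (∀ i, r i ≠ 0) →
      ∃ φ : (MvPolynomial (Fin m) K ⧸ I) →ₐ[K] L, ∀ i, v (φ (f i)) = r i := by
  classical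
  intro r hr
  let R := MvPolynomial (Fin m) K ⧸ I
  let x : Fin n → R := fun i => f i
  have hx : AlgebraicIndependent K x := hf
  obtain ⟨t, hst, ht⟩ := exists_isTranscendenceBasis_superset hx.coe_range
  let B := Algebra.adjoin K (Set.range ((↑) : t → R))
  have : Algebra.IsAlgebraic B R := ht.isAlgebraic
  have : Algebra.FiniteType B R := .of_restrictScalars_finiteType K B R
  obtain ⟨y, hy, hext'⟩ := exists_ne_zero_forall_exists_extension (B := B) (R := R) (L := L)
    Subtype.val_injective
  let e : MvPolynomial t K ≃ₐ[K] B := ht.1.aevalEquiv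
  -- `S w` is the sphere of radius `rᵢ` when `w = fᵢ`, and all of `L` off the `fᵢ`.
  let S : t → Set L := fun w => {a | ∀ i, x i = w → v a = r i}
  have hS : ∀ w, (S w).Infinite := by
    intro w
    by_cases hw : ∃ i, x i = w
    · obtain ⟨i, hi⟩ := hw
      refine (infinite_sphere v hsurj (hr i)).mono fun a ha j hj => ?_
      rw [hx.injective (hj.trans hi.symm)]
      exact ha
    · exact Set.infinite_univ.mono fun a _ i hi => (hw ⟨i, hi⟩).elim
  obtain ⟨a, haS, hay⟩ : ∃ a ∈ Set.pi Set.univ S, MvPolynomial.aeval a (e.symm y) ≠ 0 := by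
    by_contra! h
    refine hy (e.symm.injective ?_)
    rw [map_zero]
    refine MvPolynomial.map_injective _ (algebraMap K L).injective ?_
    rw [map_zero]
    refine MvPolynomial.funext_set S hS fun a ha => ?_
    rw [map_zero, MvPolynomial.eval_map, ← MvPolynomial.aeval_def, h a ha]
  let ψ : B →ₐ[K] L := (MvPolynomial.aeval a).comp e.symm.toAlgHom
  obtain ⟨φ, hφ⟩ := hext' ψ.toRingHom hay
  refine ⟨{ φ with commutes' := fun c => (hφ (algebraMap K B c)).trans (ψ.commutes c) },
    fun i => ?_⟩
  let w : t := ⟨x i, hst ⟨i, rfl⟩⟩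
  have hw : ((e (MvPolynomial.X w) : B) : R) = x i := by
    exact (ht.1.algebraMap_aevalEquiv (MvPolynomial.X w)).trans (MvPolynomial.aeval_X _ w)
  have hφi : φ (x i) = a w := by
    rw [← hw]
    refine (hφ (e (MvPolynomial.X w))).trans ?_
    simp [ψ]
  exact (congrArg v hφi).trans (haS w (Set.mem_univ w) i rfl)
end
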